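/- arXiv:1205.7018 — 2 statements merged into one kernel-verified Lean document; each statement's English description precedes it below -/
import Mathlib

section
/- Let 0 < ε < ε₀, f ∈ 𝔚_{ε₀}, and u₂ ∈ ℝ. For A ∈ ℝ define m_A(u) = e^{−u/ε}·(A + ε⁻¹∫_{−∞}^u f'(t)e^{t/ε}dt) for u < u₂ (these are exactly the solutions of ε·m' + m = f' on (−∞,u₂)). Then: (i) m_A is twice differentiable with m_A''(u) = ε⁻¹e^{−u/ε}·(ε⁻¹A + ∫_{−∞}^u f'''(t)e^{t/ε}dt); (ii) if m_A''(u) ≤ 0 for all u < u₂, then A ≤ 0; (iii) for every A ≤ 0 and every x ∈ Ω_ε with u_R(x) < u₂, writing u = u_R(x), one has m_A(u)·(x₁ − u) + f(u) ≥ m_0(u)·(x₁ − u) + f(u); that is, among the candidate functions corresponding to A ≤ 0, the choice A = 0 gives the pointwise minimal one. -/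
open MeasureTheory Set Real

/-- The parabolic strip `Ω_ε`. -/
def parabStrip (ε : ℝ) : Set (ℝ × ℝ) := {x | x.1 ^ 2 ≤ x.2 ∧ x.2 ≤ x.1 ^ 2 + ε ^ 2}

/-- The parameter of the right tangent through `x`. -/
noncomputable def uRpt (ε : ℝ) (x : ℝ × ℝ) : ℝ :=
  x.1 + ε - Real.sqrt (ε ^ 2 - (x.2 - x.1 ^ 2))

/-- The class `𝔚_{ε₀}`. -/
def memWcl (ε₀ : ℝ) (f f3 : ℝ → ℝ) : Prop :=
  ContDiff ℝ 2 f ∧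
  (∀ x y : ℝ, x ≤ y → deriv (deriv f) y - deriv (deriv f) x = ∫ t in x..y, f3 t) ∧
  Integrable (fun t => f t * Real.exp (-|t| / ε₀)) ∧
  Integrable (fun t => deriv f t * Real.exp (-|t| / ε₀)) ∧
  Integrable (fun t => deriv (deriv f) t * Real.exp (-|t| / ε₀)) ∧
  Integrable (fun t => f3 t * Real.exp (-|t| / ε₀))

/-- The general solution `m_A` of `ε·m' + m = f'` on `(−∞, u₂)`. -/
noncomputable def mAsol (ε : ℝ) (f : ℝ → ℝ) (A u : ℝ) : ℝ :=
  Real.exp (-u / ε) * (A + ε⁻¹ * ∫ t in Iic u, deriv f t * Real.exp (t / ε))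

/-- The second derivative of `m_A`. -/
noncomputable def mAsol'' (ε : ℝ) (f3 : ℝ → ℝ) (A u : ℝ) : ℝ :=
  ε⁻¹ * Real.exp (-u / ε) * (ε⁻¹ * A + ∫ t in Iic u, f3 t * Real.exp (t / ε))

/-!
Write `S_A[g]` for the solution `e^{-u/ε} (A + ε⁻¹ ∫_{-∞}^u g(t) e^{t/ε} dt)` of `ε m' + m = g`.
Integrating by parts from `-∞`, where the boundary term `g(t) e^{t/ε}` vanishes because it is
integrable and convergent, gives `S_A[g]' = S_{-A/ε}[g']`. Since `m_A = S_A[f']`, two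
differentiations turn it into `S_{A/ε²}[f''']`, which is (i). The coefficient is recovered as
`A = lim_{u → -∞} e^{u/ε} S_A[g](u)`, which gives (ii). Finally `S_A[g]` increases with `A` and
`x₁ ≤ u_R(x)`, which gives (iii).
-/

open Filter Topology

theorem eq_zero_of_tendsto_atBot_of_integrableOn_Iic {E : Type*} [NormedAddCommGroup E]
    {g : ℝ → E} {b : ℝ} {L : E} (hg : IntegrableOn g (Iic b))
    (hL : Tendsto g atBot (𝓝 L)) : L = 0 := by
  refine IntegrableAtFilter.eq_zero_of_tendsto ⟨Iic b, Iic_mem_atBot b, hg⟩ (fun s hs => ?_) hL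
  obtain ⟨c, hc⟩ := mem_atBot_sets.1 hs
  exact measure_mono_top hc volume_Iic

section Primitive

variable {E : Type*} [NormedAddCommGroup E] [NormedSpace ℝ E]

/-- `g` is a primitive of the locally integrable function `g'`; for real-valued functions this
says that `g` is locally absolutely continuous with almost everywhere derivative `g'`. -/
structure IsPrimitiveOf (g g' : ℝ → E) : Prop where
  intervalIntegrable : ∀ a b, IntervalIntegrable g' volume a b
  integral_eq_sub : ∀ a b, ∫ t in a..b, g' t = g b - g a

theorem isPrimitiveOf_of_hasDerivAt [CompleteSpace E] {g g' : ℝ → E}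
    (hg : ∀ x, HasDerivAt g (g' x) x) (hg' : Continuous g') : IsPrimitiveOf g g' where
  intervalIntegrable := hg'.intervalIntegrable
  integral_eq_sub a b :=
    intervalIntegral.integral_eq_sub_of_hasDerivAt (fun x _ => hg x) (hg'.intervalIntegrable a b)

theorem hasDerivAt_integral_Iic [CompleteSpace E] {g : ℝ → E} (hg : Continuous g)
    (hi : ∀ u, IntegrableOn g (Iic u)) (u : ℝ) :
    HasDerivAt (fun v => ∫ t in Iic v, g t) (g u) u := by
  have split_at_zero : (fun v => ∫ t in Iic v, g t) =
      fun v => (∫ t in Iic 0, g t) + ∫ t in 0..v, g t := by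
    funext v
    rw [← intervalIntegral.integral_Iic_sub_Iic (hi 0) (hi v), add_sub_cancel]
  rw [split_at_zero]
  exact (hg.integral_hasStrictDerivAt 0 u).hasDerivAt.const_add _

namespace IsPrimitiveOf

theorem eq_add_integral {g g' : ℝ → E} (hg : IsPrimitiveOf g g') (a : ℝ) :
    g = fun x => g a + ∫ t in a..x, g' t := by
  funext x
  rw [hg.integral_eq_sub, add_sub_cancel]

protected theorem continuous {g g' : ℝ → E} (hg : IsPrimitiveOf g g') : Continuous g := by
  rw [hg.eq_add_integral 0]
  exact continuous_const.add (intervalIntegral.continuous_primitive hg.intervalIntegrable 0)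

theorem integral_Iic_eq {g g' : ℝ → E} (hg : IsPrimitiveOf g g') {b : ℝ}
    (hi : IntegrableOn g (Iic b)) (hi' : IntegrableOn g' (Iic b)) :
    ∫ t in Iic b, g' t = g b := by
  have tendsto_atBot : Tendsto g atBot (𝓝 (g b - ∫ t in Iic b, g' t)) := by
    refine ((intervalIntegral_tendsto_integral_Iic b hi' tendsto_id).const_sub (g b)).congr ?_
    intro a
    rw [hg.integral_eq_sub, id, sub_sub_cancel]
  exact (sub_eq_zero.1 (eq_zero_of_tendsto_atBot_of_integrableOn_Iic hi tendsto_atBot)).symm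

variable {g g' h h' : ℝ → ℝ}

theorem absolutelyContinuousOnInterval (hg : IsPrimitiveOf g g') (a b : ℝ) :
    AbsolutelyContinuousOnInterval g a b := by
  have const_ac : AbsolutelyContinuousOnInterval (fun _ => g a) a b :=
    contDiffOn_const.absolutelyContinuousOnInterval
  rw [hg.eq_add_integral a]
  exact const_ac.add
    ((hg.intervalIntegrable a b).absolutelyContinuousOnInterval_intervalIntegral left_mem_uIcc)

theorem ae_deriv_eq (hg : IsPrimitiveOf g g') (a b : ℝ) :
    ∀ᵐ x, x ∈ uIcc a b → deriv g x = g' x := by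
  filter_upwards [(hg.intervalIntegrable a b).ae_hasDerivAt_integral] with x hx hxab
  rw [hg.eq_add_integral a]
  exact ((hx hxab a left_mem_uIcc).const_add (g a)).deriv

protected theorem mul (hg : IsPrimitiveOf g g') (hh : IsPrimitiveOf h h') :
    IsPrimitiveOf (fun t => g t * h t) (fun t => g' t * h t + g t * h' t) where
  intervalIntegrable a b :=
    ((hg.intervalIntegrable a b).mul_continuousOn hh.continuous.continuousOn).add
      ((hh.intervalIntegrable a b).continuousOn_mul hg.continuous.continuousOn)
  integral_eq_sub a b := by
    rw [← (hg.absolutelyContinuousOnInterval a b).integral_deriv_mul_eq_sub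
      (hh.absolutelyContinuousOnInterval a b)]
    refine intervalIntegral.integral_congr_ae ?_
    filter_upwards [hg.ae_deriv_eq a b, hh.ae_deriv_eq a b] with x hgx hhx hx
    rw [hgx (uIoc_subset_uIcc hx), hhx (uIoc_subset_uIcc hx)]

end IsPrimitiveOf

end Primitive

section Relaxation

variable {ε : ℝ} {g g' : ℝ → ℝ}

/-- The solution `m` of the relaxation equation `ε m' + m = g` for which `e^{u/ε} m(u)` tends
to `A` at `-∞`. The functions `m_A`, `m_A'` and `m_A''` are all of this form. -/
noncomputable def relaxSol (ε : ℝ) (g : ℝ → ℝ) (A u : ℝ) : ℝ :=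
  Real.exp (-u / ε) * (A + ε⁻¹ * ∫ t in Iic u, g t * Real.exp (t / ε))

theorem exp_neg_div_mul_exp_div (u ε : ℝ) : Real.exp (-u / ε) * Real.exp (u / ε) = 1 := by
  rw [neg_div, Real.exp_neg, inv_mul_cancel₀ (Real.exp_ne_zero _)]

theorem hasDerivAt_exp_div (ε x : ℝ) :
    HasDerivAt (fun t => Real.exp (t / ε)) (ε⁻¹ * Real.exp (x / ε)) x := by
  simpa only [one_div, id, mul_comm] using ((hasDerivAt_id x).div_const ε).exp

theorem hasDerivAt_relaxSol (hg : Continuous g)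
    (hi : ∀ u, IntegrableOn (fun t => g t * Real.exp (t / ε)) (Iic u)) (A u : ℝ) :
    HasDerivAt (relaxSol ε g A) (ε⁻¹ * (g u - relaxSol ε g A u)) u := by
  have exp_part : HasDerivAt (fun v => Real.exp (-v / ε)) (Real.exp (-u / ε) * (-1 / ε)) u :=
    ((hasDerivAt_id u).neg.div_const ε).exp
  have integral_part := hasDerivAt_integral_Iic (by fun_prop) hi u
  refine (exp_part.mul ((integral_part.const_mul ε⁻¹).const_add A)).congr_deriv ?_
  rw [relaxSol]
  linear_combination (ε⁻¹ * g u) * exp_neg_div_mul_exp_div u ε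

theorem integral_Iic_deriv_mul_exp_div (hg : IsPrimitiveOf g g') {u : ℝ}
    (hi : IntegrableOn (fun t => g t * Real.exp (t / ε)) (Iic u))
    (hi' : IntegrableOn (fun t => g' t * Real.exp (t / ε)) (Iic u)) :
    ∫ t in Iic u, g' t * Real.exp (t / ε) =
      g u * Real.exp (u / ε) - ε⁻¹ * ∫ t in Iic u, g t * Real.exp (t / ε) := by
  have exp_primitive : IsPrimitiveOf (fun t => Real.exp (t / ε))
      (fun t => ε⁻¹ * Real.exp (t / ε)) :=
    isPrimitiveOf_of_hasDerivAt (hasDerivAt_exp_div ε) (by fun_prop)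
  have hi_exp : IntegrableOn (fun t => g t * (ε⁻¹ * Real.exp (t / ε))) (Iic u) := by
    simpa only [IntegrableOn, mul_left_comm] using hi.const_mul ε⁻¹
  rw [← (hg.mul exp_primitive).integral_Iic_eq hi (hi'.add hi_exp), integral_add hi' hi_exp]
  simp only [mul_left_comm _ ε⁻¹, integral_const_mul, add_sub_cancel_right]

theorem hasDerivAt_relaxSol_of_isPrimitiveOf (hg : IsPrimitiveOf g g')
    (hi : ∀ u, IntegrableOn (fun t => g t * Real.exp (t / ε)) (Iic u))
    (hi' : ∀ u, IntegrableOn (fun t => g' t * Real.exp (t / ε)) (Iic u)) (A u : ℝ) :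
    HasDerivAt (relaxSol ε g A) (relaxSol ε g' (-ε⁻¹ * A) u) u := by
  refine (hasDerivAt_relaxSol hg.continuous hi A u).congr_deriv ?_
  rw [relaxSol, relaxSol, integral_Iic_deriv_mul_exp_div hg (hi u) (hi' u)]
  linear_combination (-ε⁻¹ * g u) * exp_neg_div_mul_exp_div u ε

theorem tendsto_exp_div_mul_relaxSol_atBot (ε : ℝ) (g : ℝ → ℝ) (A : ℝ) :
    Tendsto (fun u => Real.exp (u / ε) * relaxSol ε g A u) atBot (𝓝 A) := by
  have integral_tendsto : Tendsto (fun u => ∫ t in Iic u, g t * Real.exp (t / ε)) atBot (𝓝 0) :=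
    tendsto_integral_Iic_zero tendsto_id
  have bracket_tendsto := (integral_tendsto.const_mul ε⁻¹).const_add A
  rw [mul_zero, add_zero] at bracket_tendsto
  refine bracket_tendsto.congr fun u => ?_
  rw [relaxSol, ← mul_assoc, mul_comm (Real.exp (u / ε)), exp_neg_div_mul_exp_div, one_mul]

theorem nonpos_of_relaxSol_nonpos {A u₂ : ℝ} (h : ∀ u < u₂, relaxSol ε g A u ≤ 0) : A ≤ 0 := by
  refine le_of_tendsto (tendsto_exp_div_mul_relaxSol_atBot ε g A) ?_
  filter_upwards [eventually_lt_atBot u₂] with u hu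
  exact mul_nonpos_of_nonneg_of_nonpos (Real.exp_nonneg _) (h u hu)

theorem relaxSol_monotone (ε : ℝ) (g : ℝ → ℝ) (u : ℝ) :
    Monotone fun A => relaxSol ε g A u := by
  intro A B hAB
  simp only [relaxSol]
  gcongr

end Relaxation

section WeightedIntegrability

variable {ε ε₀ : ℝ} {g : ℝ → ℝ}

theorem div_add_abs_div_le (hε : 0 < ε) (hεε₀ : ε ≤ ε₀) {t u : ℝ} (htu : t ≤ u) :
    t / ε + |t| / ε₀ ≤ 2 * |u| / ε := by
  have add_abs_le : t + |t| ≤ 2 * |u| := by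
    rcases abs_cases t with ⟨ht, -⟩ | ⟨ht, -⟩ <;> linarith [le_abs_self u, abs_nonneg u]
  calc t / ε + |t| / ε₀ ≤ t / ε + |t| / ε := by gcongr
    _ = (t + |t|) / ε := (add_div ..).symm
    _ ≤ 2 * |u| / ε := by gcongr

theorem integrableOn_Iic_mul_exp_div (hε : 0 < ε) (hεε₀ : ε ≤ ε₀)
    (hg : Integrable fun t => g t * Real.exp (-|t| / ε₀)) (u : ℝ) :
    IntegrableOn (fun t => g t * Real.exp (t / ε)) (Iic u) := by
  have weight_change : (fun t => g t * Real.exp (t / ε)) =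
      fun t => g t * Real.exp (-|t| / ε₀) * Real.exp (t / ε + |t| / ε₀) := by
    funext t
    rw [mul_assoc, ← Real.exp_add]
    ring_nf
  have weight_continuous : Continuous fun t => Real.exp (t / ε + |t| / ε₀) := by fun_prop
  rw [weight_change]
  refine hg.integrableOn.mul_bdd (c := Real.exp (2 * |u| / ε))
    weight_continuous.aestronglyMeasurable ?_
  filter_upwards [ae_restrict_mem measurableSet_Iic] with t ht
  rw [Real.norm_of_nonneg (Real.exp_nonneg _)]
  exact Real.exp_le_exp.2 (div_add_abs_div_le hε hεε₀ ht)

theorem intervalIntegrable_of_integrable_mul_exp_neg_abs_div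
    (hg : Integrable fun t => g t * Real.exp (-|t| / ε₀)) (a b : ℝ) :
    IntervalIntegrable g volume a b := by
  have unweight : g = fun t => g t * Real.exp (-|t| / ε₀) * Real.exp (|t| / ε₀) := by
    funext t
    rw [mul_assoc, exp_neg_div_mul_exp_div, mul_one]
  rw [unweight]
  exact hg.intervalIntegrable.mul_continuousOn (by fun_prop)

end WeightedIntegrability

theorem mAsol_eq_relaxSol (ε : ℝ) (f : ℝ → ℝ) : mAsol ε f = relaxSol ε (deriv f) := rfl

theorem mAsol''_eq_relaxSol (ε : ℝ) (f3 : ℝ → ℝ) (A u : ℝ) :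
    mAsol'' ε f3 A u = relaxSol ε f3 (-ε⁻¹ * (-ε⁻¹ * A)) u := by
  rw [mAsol'', relaxSol]
  ring

namespace memWcl

variable {ε ε₀ : ℝ} {f f3 : ℝ → ℝ}

theorem isPrimitiveOf_deriv (hf : memWcl ε₀ f f3) :
    IsPrimitiveOf (deriv f) (deriv (deriv f)) := by
  have contDiff_deriv : ContDiff ℝ 1 (deriv f) := hf.1.deriv'
  exact isPrimitiveOf_of_hasDerivAt
    (fun x => (contDiff_deriv.differentiable one_ne_zero x).hasDerivAt)
    (contDiff_deriv.continuous_deriv le_rfl)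

theorem isPrimitiveOf_deriv_deriv (hf : memWcl ε₀ f f3) : IsPrimitiveOf (deriv (deriv f)) f3 := by
  obtain ⟨-, sub_eq_integral, -, -, -, f3_integrable⟩ := hf
  refine ⟨intervalIntegrable_of_integrable_mul_exp_neg_abs_div f3_integrable, fun a b => ?_⟩
  rcases le_total a b with hab | hba
  · exact (sub_eq_integral a b hab).symm
  · rw [intervalIntegral.integral_symm, ← sub_eq_integral b a hba, neg_sub]

theorem hasDerivAt_mAsol (hf : memWcl ε₀ f f3) (hε : 0 < ε) (hεε₀ : ε ≤ ε₀) (A u : ℝ) :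
    HasDerivAt (mAsol ε f A) (relaxSol ε (deriv (deriv f)) (-ε⁻¹ * A) u) u := by
  have primitive := hf.isPrimitiveOf_deriv
  obtain ⟨-, -, -, f1_integrable, f2_integrable, -⟩ := hf
  rw [mAsol_eq_relaxSol]
  exact hasDerivAt_relaxSol_of_isPrimitiveOf primitive
    (integrableOn_Iic_mul_exp_div hε hεε₀ f1_integrable)
    (integrableOn_Iic_mul_exp_div hε hεε₀ f2_integrable) A u

theorem hasDerivAt_deriv_mAsol (hf : memWcl ε₀ f f3) (hε : 0 < ε) (hεε₀ : ε ≤ ε₀) (A u : ℝ) :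
    HasDerivAt (relaxSol ε (deriv (deriv f)) (-ε⁻¹ * A)) (mAsol'' ε f3 A u) u := by
  have primitive := hf.isPrimitiveOf_deriv_deriv
  obtain ⟨-, -, -, -, f2_integrable, f3_integrable⟩ := hf
  rw [mAsol''_eq_relaxSol]
  exact hasDerivAt_relaxSol_of_isPrimitiveOf primitive
    (integrableOn_Iic_mul_exp_div hε hεε₀ f2_integrable)
    (integrableOn_Iic_mul_exp_div hε hεε₀ f3_integrable) _ u

end memWcl

theorem nonpos_of_mAsol''_nonpos {ε : ℝ} (hε : ε ≠ 0) {f3 : ℝ → ℝ} {A u₂ : ℝ}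
    (h : ∀ u < u₂, mAsol'' ε f3 A u ≤ 0) : A ≤ 0 := by
  simp only [mAsol''_eq_relaxSol] at h
  have coeff_nonpos := nonpos_of_relaxSol_nonpos h
  rw [← mul_assoc, neg_mul_neg] at coeff_nonpos
  exact nonpos_of_mul_nonpos_right coeff_nonpos (mul_self_pos.2 (inv_ne_zero hε))

theorem mAsol_monotone (ε : ℝ) (f : ℝ → ℝ) (u : ℝ) : Monotone fun A => mAsol ε f A u := by
  rw [mAsol_eq_relaxSol]
  exact relaxSol_monotone ε (deriv f) u

theorem fst_le_uRpt {ε : ℝ} (hε : 0 ≤ ε) {x : ℝ × ℝ} (hx : x.1 ^ 2 ≤ x.2) : x.1 ≤ uRpt ε x := by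
  have sqrt_le : √(ε ^ 2 - (x.2 - x.1 ^ 2)) ≤ ε :=
    (Real.sqrt_le_left hε).2 (sub_le_self _ (sub_nonneg.2 hx))
  rw [uRpt]
  linarith

theorem stmt8 (ε ε₀ : ℝ) (hε : 0 < ε) (hεε₀ : ε < ε₀) (f f3 : ℝ → ℝ)
    (hf : memWcl ε₀ f f3) (u₂ : ℝ) :
    (∀ A : ℝ, ∃ m' : ℝ → ℝ,
      (∀ u : ℝ, u < u₂ → HasDerivAt (mAsol ε f A) (m' u) u) ∧
      (∀ u : ℝ, u < u₂ → HasDerivAt m' (mAsol'' ε f3 A u) u)) ∧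
    (∀ A : ℝ, (∀ u : ℝ, u < u₂ → mAsol'' ε f3 A u ≤ 0) → A ≤ 0) ∧
    (∀ A : ℝ, A ≤ 0 → ∀ x ∈ parabStrip ε, uRpt ε x < u₂ →
      mAsol ε f 0 (uRpt ε x) * (x.1 - uRpt ε x) + f (uRpt ε x) ≤
        mAsol ε f A (uRpt ε x) * (x.1 - uRpt ε x) + f (uRpt ε x)) := by
  refine ⟨fun A => ⟨relaxSol ε (deriv (deriv f)) (-ε⁻¹ * A),
      fun u _ => hf.hasDerivAt_mAsol hε hεε₀.le A u,
      fun u _ => hf.hasDerivAt_deriv_mAsol hε hεε₀.le A u⟩,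
    fun A hA => nonpos_of_mAsol''_nonpos hε.ne' hA, fun A hA x hx _ => ?_⟩
  have mA_le_m0 : mAsol ε f A (uRpt ε x) ≤ mAsol ε f 0 (uRpt ε x) :=
    mAsol_monotone ε f (uRpt ε x) hA
  have offset_nonpos : x.1 - uRpt ε x ≤ 0 := sub_nonpos.2 (fst_le_uRpt hε.le hx.1)
  gcongr ?_ + f (uRpt ε x)
  exact mul_le_mul_of_nonpos_right mA_le_m0 offset_nonpos
end

section
/- Suppose 0 < ε < ε₀, f ∈ 𝔚_{ε₀}, and ∫_u^{+∞} f'''(t)e^{−t/ε}dt ≥ 0 for every u ∈ ℝ. Then for every x = (x₁,x₂) ∈ Ω_ε, B_ε(x; f) = m_L(u)·(x₁ − u) + f(u), where u = u_L(x) = x₁ − ε + √(ε² − (x₂ − x₁²)) and m_L(u) = ε⁻¹e^{u/ε}∫_u^{+∞} f'(t)e^{−t/ε}dt. -/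
open MeasureTheory Set Real

/-- The average of `φ` over the interval with endpoints `a`, `b`. -/
noncomputable def intAvg (φ : ℝ → ℝ) (a b : ℝ) : ℝ := (∫ t in a..b, φ t) / (b - a)

/-- `φ` belongs to the ball of radius `ε` of (quadratic-norm) BMO on the interval `(l, r)`. -/
def memBMOe (ε l r : ℝ) (φ : ℝ → ℝ) : Prop :=
  IntegrableOn φ (Ioo l r) ∧
  IntegrableOn (fun t => (φ t) ^ 2) (Ioo l r) ∧
  ∀ c d : ℝ, l ≤ c → c < d → d ≤ r →
    intAvg (fun t => (φ t) ^ 2) c d - (intAvg φ c d) ^ 2 ≤ ε ^ 2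

/-- The Bellman function, computed with the interval `I = (0,1)`. -/
noncomputable def bellmanFn (ε : ℝ) (f : ℝ → ℝ) (x₁ x₂ : ℝ) : ℝ :=
  sSup {y | ∃ φ : ℝ → ℝ, memBMOe ε 0 1 φ ∧
    IntegrableOn (fun t => f (φ t)) (Ioo 0 1) ∧
    intAvg φ 0 1 = x₁ ∧ intAvg (fun t => (φ t) ^ 2) 0 1 = x₂ ∧
    y = intAvg (fun t => f (φ t)) 0 1}

/-- The parameter of the left tangent through `x`. -/
noncomputable def uLpt (ε : ℝ) (x : ℝ × ℝ) : ℝ :=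
  x.1 - ε + Real.sqrt (ε ^ 2 - (x.2 - x.1 ^ 2))

/-!
Let `m`, `p`, `q` be the averages of the first three derivatives of `f` over `[w, ∞)` against the
density `ε⁻¹ exp ((w - t) / ε)`, so that `m = m_L` and `q ≥ 0` by hypothesis. Integration by parts
gives `f' = m - ε p`, `m' = p` and `p' = q`, whence the Taylor-type formula
`f v = f u + m u (v - u) - p u (ε (v - u) - (v - u)² / 2) - ∫_u^v q w κ (v - w) dw`, where
`κ z = ε z - z² / 2`.

Put `v = φ t` and average over `I`. The term in `p u` vanishes, because the point of averages of
`φ` lies on the tangent to the upper parabola that starts at `(u, u²)`. The remainder is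
nonnegative: when `⟨φ⟩_I ≤ w + ε`, the function `ε (φ - w)⁺ - ((φ - w)⁺)² / 2` has nonnegative
integral over `I`, since the rising sun lemma splits `I` into intervals on which the mean of `φ` is
exactly `w + ε`, where the bound on the variance is precisely what is needed, and a set where
`φ ≤ w + ε`, on which the function is pointwise nonnegative. Fubini is justified by the exponential
decay in `w` of `⟨((φ - w)⁺)²⟩_I`, a weak form of the John–Nirenberg inequality.

The bound is attained by `φ t = u + ε log⁺ (a / t)` on `(0, 1)`: substituting `v = φ t` turns the
average over `(0, a)` into the exponential average of `f` over `[u, ∞)`.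
-/

open Filter Topology

/-! ### The rising sun lemma -/

theorem setIntegral_nonneg_of_forall_connectedComponentIn {X : Type*} [TopologicalSpace X]
    [LocallyConnectedSpace X] [TopologicalSpace.SeparableSpace X] [MeasurableSpace X]
    [OpensMeasurableSpace X] {μ : Measure X} {s : Set X} {g : X → ℝ} (hs : IsOpen s)
    (hg : IntegrableOn g s μ)
    (h : ∀ x ∈ s, 0 ≤ ∫ t in connectedComponentIn s x, g t ∂μ) :
    0 ≤ ∫ t in s, g t ∂μ := by
  let S : Set (Set X) := connectedComponentIn s '' s
  have hopen : ∀ C ∈ S, IsOpen C := by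
    rintro _ ⟨x, -, rfl⟩
    exact hs.connectedComponentIn
  have hdisj : S.PairwiseDisjoint id := by
    rintro _ ⟨x, -, rfl⟩ _ ⟨y, -, rfl⟩ hxy
    refine Set.disjoint_left.2 fun z hzx hzy => hxy ?_
    rw [connectedComponentIn_eq hzx, connectedComponentIn_eq hzy]
  have hcover : ⋃ C : S, (C : Set X) = s := by
    refine Subset.antisymm (iUnion_subset ?_) fun x hx =>
      mem_iUnion.2 ⟨⟨_, x, hx, rfl⟩, mem_connectedComponentIn hx⟩
    rintro ⟨_, x, -, rfl⟩
    exact connectedComponentIn_subset s x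
  have : Countable S := by
    refine (hdisj.countable_of_isOpen hopen ?_).to_subtype
    rintro _ ⟨x, hx, rfl⟩
    exact ⟨x, mem_connectedComponentIn hx⟩
  have hsum := hasSum_integral_iUnion (fun C : S => (hopen C C.2).measurableSet)
    (fun C D hCD => hdisj C.2 D.2 fun h => hCD (Subtype.ext h)) (hcover.symm ▸ hg)
  rw [hcover] at hsum
  refine hsum.nonneg ?_
  rintro ⟨_, x, hx, rfl⟩
  exact h x hx

section OpenInLinearOrder

variable {α : Type*} [ConditionallyCompleteLinearOrder α] [TopologicalSpace α] [OrderTopology α]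
  [DenselyOrdered α] {s : Set α}

theorem csInf_notMem_of_isOpen [NoMinOrder α] (hs : IsOpen s) (hb : BddBelow s) : sInf s ∉ s := by
  intro hmem
  obtain ⟨a, ha, hsub⟩ := exists_Ioc_subset_of_mem_nhds (hs.mem_nhds hmem) (exists_lt _)
  obtain ⟨y, hay, hy⟩ := exists_between ha
  exact (csInf_le hb (hsub ⟨hay, hy.le⟩)).not_gt hy

theorem csSup_notMem_of_isOpen [NoMaxOrder α] (hs : IsOpen s) (hb : BddAbove s) : sSup s ∉ s :=
  csInf_notMem_of_isOpen (α := αᵒᵈ) hs hb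

theorem exists_connectedComponentIn_eq_Ioo [NoMinOrder α] [NoMaxOrder α]
    [LocallyConnectedSpace α] (hs : IsOpen s) (hbelow : BddBelow s) (habove : BddAbove s)
    {x : α} (hx : x ∈ s) :
    ∃ a b, a < b ∧ a ∉ s ∧ b ∉ s ∧ connectedComponentIn s x = Ioo a b := by
  set C := connectedComponentIn s x
  have hCs : C ⊆ s := connectedComponentIn_subset s x
  have hCopen : IsOpen C := hs.connectedComponentIn
  have hxC : x ∈ C := mem_connectedComponentIn hx
  have hpre : IsPreconnected C := isPreconnected_connectedComponentIn
  have hCbelow := hbelow.mono hCs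
  have hCabove := habove.mono hCs
  have hinf := csInf_notMem_of_isOpen hCopen hCbelow
  have hsup := csSup_notMem_of_isOpen hCopen hCabove
  have hclosed : ∀ y ∈ closure C, y ∈ s → y ∈ C := fun y hy hys =>
    (hpre.subset_closure (subset_insert y C) (insert_subset hy subset_closure))
      |>.subset_connectedComponentIn (mem_insert_of_mem y hxC) (insert_subset hys hCs)
      (mem_insert y C)
  have hsub : C ⊆ Ioo (sInf C) (sSup C) := fun y hy =>
    ⟨(csInf_le hCbelow hy).lt_of_ne fun h => hinf (h ▸ hy),
      (le_csSup hCabove hy).lt_of_ne fun h => hsup (h ▸ hy)⟩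
  exact ⟨sInf C, sSup C, (hsub hxC).1.trans (hsub hxC).2,
    fun h => hinf (hclosed _ (csInf_mem_closure ⟨x, hxC⟩ hCbelow) h),
    fun h => hsup (hclosed _ (csSup_mem_closure ⟨x, hxC⟩ hCabove) h),
    hsub.antisymm (IsConnected.Ioo_csInf_csSup_subset ⟨⟨x, hxC⟩, hpre⟩ hCbelow hCabove)⟩

end OpenInLinearOrder

/-- The set of points of `(a, b)` lying in the shadow of F. Riesz' rising sun lemma: those which
the graph of `Φ` exceeds somewhere further to the right in `(a, b]`. -/
def risingSunSet (Φ : ℝ → ℝ) (a b : ℝ) : Set ℝ :=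
  {x ∈ Ioo a b | ∃ y ∈ Ioc x b, Φ x < Φ y}

namespace risingSunSet

variable {Φ : ℝ → ℝ} {a b : ℝ}

theorem subset_Ioo : risingSunSet Φ a b ⊆ Ioo a b := fun _ hx => hx.1

theorem isOpen (hΦ : ContinuousOn Φ (Icc a b)) : IsOpen (risingSunSet Φ a b) := by
  have hunion : risingSunSet Φ a b =
      ⋃ y ∈ Iic b, Ioo a b ∩ Φ ⁻¹' Iio (Φ y) ∩ Iio y := by
    ext x
    simp only [risingSunSet, mem_ofPred_eq, mem_iUnion, mem_inter_iff, mem_preimage, mem_Iio,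
      mem_Iic, mem_Ioc, exists_prop]
    exact ⟨fun ⟨hx, y, ⟨hxy, hyb⟩, h⟩ => ⟨y, hyb, ⟨hx, h⟩, hxy⟩,
      fun ⟨y, hyb, ⟨hx, h⟩, hxy⟩ => ⟨hx, y, ⟨hxy, hyb⟩, h⟩⟩
  rw [hunion]
  exact isOpen_biUnion fun y _ => ((hΦ.mono Ioo_subset_Icc_self).isOpen_inter_preimage
    isOpen_Ioo isOpen_Iio).inter isOpen_Iio

theorem le_of_notMem {x y : ℝ} (hx : x ∈ Ioo a b) (hxS : x ∉ risingSunSet Φ a b)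
    (hy : y ∈ Icc x b) : Φ y ≤ Φ x := by
  rcases hy.1.eq_or_lt with rfl | hxy
  · rfl
  · exact not_lt.1 fun h => hxS ⟨hx, y, ⟨hxy, hy.2⟩, h⟩

theorem deriv_nonpos_of_notMem {x φ : ℝ} (hx : x ∈ Ioo a b) (hxS : x ∉ risingSunSet Φ a b)
    (hΦ : HasDerivAt Φ φ x) : φ ≤ 0 := by
  have hslope : Tendsto (slope Φ x) (𝓝[>] x) (𝓝 φ) :=
    (hasDerivAt_iff_tendsto_slope.1 hΦ).mono_left (nhdsGT_le_nhdsNE x)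
  refine le_of_tendsto hslope ?_
  filter_upwards [Ioo_mem_nhdsGT hx.2] with y hy
  rw [slope_def_field]
  exact div_nonpos_of_nonpos_of_nonneg
    (sub_nonpos.2 (le_of_notMem hx hxS ⟨hy.1.le, hy.2.le⟩)) (sub_nonneg.2 hy.1.le)

theorem le_of_Ioo_subset (hΦ : ContinuousOn Φ (Icc a b)) {c d : ℝ} (hac : a ≤ c) (hdb : d ≤ b)
    (hsub : Ioo c d ⊆ risingSunSet Φ a b) (hd : ∀ y ∈ Icc d b, Φ y ≤ Φ d) {x : ℝ}
    (hx : x ∈ Ioo c d) : Φ x ≤ Φ d := by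
  have hxb : x ∈ Icc x b := ⟨le_rfl, hx.2.le.trans hdb⟩
  obtain ⟨w, hw, hmax⟩ := isCompact_Icc.exists_isMaxOn ⟨x, hxb⟩
    (hΦ.mono (Icc_subset_Icc_left (hac.trans hx.1.le)))
  have hdw : d ≤ w := by
    by_contra! hwd
    obtain ⟨-, y, hy, hlt⟩ := hsub ⟨hx.1.trans_le hw.1, hwd⟩
    exact (hmax (show y ∈ Icc x b from ⟨hw.1.trans hy.1.le, hy.2⟩)).not_gt hlt
  exact (hmax hxb).trans (hd w ⟨hdw, hw.2⟩)

theorem eq_of_Ioo_subset (hΦ : ContinuousOn Φ (Icc a b)) (ha : ∀ y ∈ Icc a b, Φ y ≤ Φ a)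
    {c d : ℝ} (hcd : c < d) (hsub : Ioo c d ⊆ risingSunSet Φ a b)
    (hc : c ∉ risingSunSet Φ a b) (hd : d ∉ risingSunSet Φ a b) : Φ c = Φ d := by
  obtain ⟨hac, hdb⟩ := (Ioo_subset_Ioo_iff hcd).1 (hsub.trans subset_Ioo)
  have hcmax : Φ d ≤ Φ c := by
    rcases hac.eq_or_lt with rfl | hac'
    · exact ha d ⟨hcd.le, hdb⟩
    · exact le_of_notMem ⟨hac', hcd.trans_le hdb⟩ hc ⟨hcd.le, hdb⟩
  have hdmax : ∀ y ∈ Icc d b, Φ y ≤ Φ d := by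
    rcases hdb.eq_or_lt with rfl | hdb'
    · intro y hy
      rw [le_antisymm hy.2 hy.1]
    · exact fun y hy => le_of_notMem ⟨hac.trans_lt hcd, hdb'⟩ hd hy
  refine le_antisymm ?_ hcmax
  have hcont : ContinuousOn Φ (closure (Ioo c d)) := by
    rw [closure_Ioo hcd.ne]
    exact hΦ.mono (Icc_subset_Icc hac hdb)
  exact le_on_closure (fun x hx => le_of_Ioo_subset hΦ hac hdb hsub hdmax hx) hcont
    continuousOn_const (by rw [closure_Ioo hcd.ne]; exact left_mem_Icc.2 hcd.le)

end risingSunSet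

theorem exists_eq_left_forall_Icc_le {Φ : ℝ → ℝ} {a b : ℝ} (hab : a ≤ b)
    (hΦ : ContinuousOn Φ (Icc a b)) (hba : Φ b ≤ Φ a) :
    ∃ z ∈ Icc a b, Φ z = Φ a ∧ ∀ y ∈ Icc z b, Φ y ≤ Φ z := by
  have hcompact : IsCompact (Icc a b ∩ Φ ⁻¹' {Φ a}) :=
    isCompact_Icc.of_isClosed_subset (hΦ.preimage_isClosed_of_isClosed isClosed_Icc
      isClosed_singleton) inter_subset_left
  obtain ⟨z, ⟨hz, hza : Φ z = Φ a⟩, hmax⟩ :=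
    hcompact.exists_isGreatest ⟨a, left_mem_Icc.2 hab, rfl⟩
  refine ⟨z, hz, hza, fun y hy => hza ▸ ?_⟩
  by_contra! hlt
  obtain ⟨w, hw, hwa⟩ := intermediate_value_Icc' hy.2
    (hΦ.mono (Icc_subset_Icc_left (hz.1.trans hy.1))) ⟨hba, hlt.le⟩
  have hwz : w ≤ z := hmax ⟨⟨hz.1.trans (hy.1.trans hw.1), hw.2⟩, hwa⟩
  obtain rfl : y = w := le_antisymm hw.1 (hwz.trans hy.1)
  exact hlt.ne' hwa

section ZeroMeanReduction

variable {φ g : ℝ → ℝ} {a b : ℝ}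

theorem intervalIntegrable_subinterval {c d : ℝ} (hg : IntervalIntegrable g volume a b)
    (hac : a ≤ c) (hcd : c ≤ d) (hdb : d ≤ b) : IntervalIntegrable g volume c d := by
  refine hg.mono_set ?_
  rw [uIcc_of_le hcd, uIcc_of_le (hac.trans (hcd.trans hdb))]
  exact Icc_subset_Icc hac hdb

theorem continuousOn_Icc_primitive (hab : a ≤ b) (hφ : IntervalIntegrable φ volume a b) :
    ContinuousOn (fun x => ∫ t in a..x, φ t) (Icc a b) :=
  uIcc_of_le hab ▸ intervalIntegral.continuousOn_primitive_interval' hφ left_mem_uIcc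

theorem setIntegral_risingSunSet_primitive_nonneg (hab : a ≤ b)
    (hφ : IntervalIntegrable φ volume a b) (hg : IntervalIntegrable g volume a b)
    (hprim : ∀ y ∈ Icc a b, ∫ t in a..y, φ t ≤ 0)
    (hzero : ∀ c d, a ≤ c → c < d → d ≤ b → ∫ t in c..d, φ t = 0 → 0 ≤ ∫ t in c..d, g t) :
    0 ≤ ∫ t in risingSunSet (fun x => ∫ s in a..x, φ s) a b, g t := by
  set Φ : ℝ → ℝ := fun x => ∫ s in a..x, φ s
  set S := risingSunSet Φ a b
  have hΦ : ContinuousOn Φ (Icc a b) := continuousOn_Icc_primitive hab hφ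
  have hS : S ⊆ Ioo a b := risingSunSet.subset_Ioo
  have hSopen : IsOpen S := risingSunSet.isOpen hΦ
  have hgS : IntegrableOn g S :=
    ((intervalIntegrable_iff_integrableOn_Ioo_of_le hab).1 hg).mono_set hS
  refine setIntegral_nonneg_of_forall_connectedComponentIn hSopen hgS fun x hx => ?_
  obtain ⟨c, d, hcd, hc, hd, hC⟩ := exists_connectedComponentIn_eq_Ioo hSopen
    (bddBelow_Ioo.mono hS) (bddAbove_Ioo.mono hS) hx
  have hsub : Ioo c d ⊆ S := hC ▸ connectedComponentIn_subset S x
  obtain ⟨hac, hdb⟩ := (Ioo_subset_Ioo_iff hcd).1 (hsub.trans hS)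
  have hend : Φ c = Φ d :=
    risingSunSet.eq_of_Ioo_subset hΦ (by simpa [Φ] using hprim) hcd hsub hc hd
  rw [hC, ← integral_Ioc_eq_integral_Ioo, ← intervalIntegral.integral_of_le hcd.le]
  refine hzero c d hac hcd hdb ?_
  rw [← intervalIntegral.integral_interval_sub_left (a := a)
    (intervalIntegrable_subinterval hφ le_rfl (hac.trans hcd.le) hdb)
    (intervalIntegrable_subinterval hφ le_rfl hac (hcd.le.trans hdb)), sub_eq_zero]
  exact hend.symm

theorem intervalIntegral_nonneg_of_forall_primitive_nonpos (hab : a ≤ b)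
    (hφ : IntervalIntegrable φ volume a b) (hg : IntervalIntegrable g volume a b)
    (hprim : ∀ y ∈ Icc a b, ∫ t in a..y, φ t ≤ 0)
    (hneg : ∀ t ∈ Ioo a b, φ t ≤ 0 → 0 ≤ g t)
    (hzero : ∀ c d, a ≤ c → c < d → d ≤ b → ∫ t in c..d, φ t = 0 → 0 ≤ ∫ t in c..d, g t) :
    0 ≤ ∫ t in a..b, g t := by
  set S := risingSunSet (fun x => ∫ s in a..x, φ s) a b
  have hSmeas : MeasurableSet S :=
    (risingSunSet.isOpen (continuousOn_Icc_primitive hab hφ)).measurableSet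
  have houtside : 0 ≤ ∫ t in Ioo a b \ S, g t := by
    refine setIntegral_nonneg_of_ae_restrict ?_
    rw [EventuallyLE, ae_restrict_iff' (measurableSet_Ioo.diff hSmeas)]
    filter_upwards [hφ.ae_hasDerivAt_integral] with x hx hxS
    have hxab : x ∈ uIcc a b := uIcc_of_le hab ▸ Ioo_subset_Icc_self hxS.1
    exact hneg x hxS.1 (risingSunSet.deriv_nonpos_of_notMem hxS.1 hxS.2
      (hx hxab a left_mem_uIcc))
  rw [intervalIntegral.integral_of_le hab, integral_Ioc_eq_integral_Ioo,
    ← integral_inter_add_sdiff hSmeas ((intervalIntegrable_iff_integrableOn_Ioo_of_le hab).1 hg),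
    inter_eq_self_of_subset_right risingSunSet.subset_Ioo]
  exact add_nonneg (setIntegral_risingSunSet_primitive_nonneg hab hφ hg hprim hzero) houtside

theorem intervalIntegral_nonneg_of_integral_eq_zero_imp (hab : a ≤ b)
    (hφ : IntervalIntegrable φ volume a b) (hg : IntervalIntegrable g volume a b)
    (hmean : ∫ t in a..b, φ t ≤ 0) (hneg : ∀ t ∈ Ioo a b, φ t ≤ 0 → 0 ≤ g t)
    (hzero : ∀ c d, a ≤ c → c < d → d ≤ b → ∫ t in c..d, φ t = 0 → 0 ≤ ∫ t in c..d, g t) :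
    0 ≤ ∫ t in a..b, g t := by
  obtain ⟨z, ⟨haz, hzb⟩, hza, hmax⟩ := exists_eq_left_forall_Icc_le hab
    (continuousOn_Icc_primitive hab hφ) (by simpa using hmean)
  simp only [intervalIntegral.integral_same] at hza
  have hleft : 0 ≤ ∫ t in a..z, g t := by
    rcases haz.eq_or_lt with rfl | haz'
    · simp
    · exact hzero a z le_rfl haz' hzb hza
  have hright : 0 ≤ ∫ t in z..b, g t := by
    refine intervalIntegral_nonneg_of_forall_primitive_nonpos hzb
      (intervalIntegrable_subinterval hφ haz hzb le_rfl)
      (intervalIntegrable_subinterval hg haz hzb le_rfl) (fun y hy => ?_)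
      (fun t ht => hneg t ⟨haz.trans_lt ht.1, ht.2⟩) fun c d hzc => hzero c d (haz.trans hzc)
    rw [← intervalIntegral.integral_interval_sub_left (a := a)
      (intervalIntegrable_subinterval hφ le_rfl (haz.trans hy.1) hy.2)
      (intervalIntegrable_subinterval hφ le_rfl haz hzb)]
    exact sub_nonpos.2 (hmax y hy)
  rw [← intervalIntegral.integral_add_adjacent_intervals
    (intervalIntegrable_subinterval hg le_rfl haz hzb)
    (intervalIntegrable_subinterval hg haz hzb le_rfl)]
  exact add_nonneg hleft hright

end ZeroMeanReduction

/-! ### Mean oscillation -/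

theorem intervalIntegrable_sq_sub_const {φ : ℝ → ℝ} {c d : ℝ} (hφ : IntervalIntegrable φ volume c d)
    (hφsq : IntervalIntegrable (fun t => φ t ^ 2) volume c d) (K : ℝ) :
    IntervalIntegrable (fun t => (φ t - K) ^ 2) volume c d := by
  simp only [sub_sq]
  exact (hφsq.sub ((hφ.const_mul 2).mul_const _)).add intervalIntegrable_const

theorem integral_sq_sub_const {φ : ℝ → ℝ} {c d : ℝ} (hφ : IntervalIntegrable φ volume c d)
    (hφsq : IntervalIntegrable (fun t => φ t ^ 2) volume c d) (K : ℝ) :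
    ∫ t in c..d, (φ t - K) ^ 2 =
      (∫ t in c..d, φ t ^ 2) - 2 * K * (∫ t in c..d, φ t) + K ^ 2 * (d - c) := by
  have hexpand : ∀ t, (φ t - K) ^ 2 = φ t ^ 2 - 2 * K * φ t + K ^ 2 := fun t => by ring
  simp only [hexpand]
  rw [intervalIntegral.integral_add (hφsq.sub (hφ.const_mul _)) intervalIntegrable_const,
    intervalIntegral.integral_sub hφsq (hφ.const_mul _), intervalIntegral.integral_const_mul,
    intervalIntegral.integral_const, smul_eq_mul, mul_comm (d - c)]

theorem intAvg_sq_sub_intAvg_sq {φ : ℝ → ℝ} {c d : ℝ} (hcd : c < d)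
    (hφ : IntervalIntegrable φ volume c d)
    (hφsq : IntervalIntegrable (fun t => φ t ^ 2) volume c d) (K : ℝ) :
    intAvg (fun t => φ t ^ 2) c d - intAvg φ c d ^ 2 =
      intAvg (fun t => (φ t - K) ^ 2) c d - (intAvg φ c d - K) ^ 2 := by
  have hdc : d - c ≠ 0 := (sub_pos.2 hcd).ne'
  simp only [intAvg, integral_sq_sub_const hφ hφsq K]
  field_simp
  ring

/-- The kernel of the remainder in the second-order Taylor formula
`taylor_eq_sub_integral_mul_quadratic`, which compares `f` with its Bellman candidate. -/
noncomputable def bellmanKernel (ε z : ℝ) : ℝ := ε * z⁺ - z⁺ ^ 2 / 2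

namespace bellmanKernel

variable {ε z : ℝ}

theorem continuous : Continuous (bellmanKernel ε) := by
  unfold bellmanKernel
  fun_prop

theorem of_nonneg (hz : 0 ≤ z) : bellmanKernel ε z = ε * z - z ^ 2 / 2 := by
  rw [bellmanKernel, posPart_eq_self.2 hz]

theorem of_nonpos (hz : z ≤ 0) : bellmanKernel ε z = 0 := by
  simp [bellmanKernel, posPart_eq_zero.2 hz]

theorem quadratic_le (hε : 0 ≤ ε) : ε * z - z ^ 2 / 2 ≤ bellmanKernel ε z := by
  rcases le_total 0 z with hz | hz
  · exact (of_nonneg hz).ge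
  · rw [of_nonpos hz]
    nlinarith [mul_nonneg hε (neg_nonneg.2 hz), sq_nonneg z]

theorem nonneg (hz : z ≤ 2 * ε) : 0 ≤ bellmanKernel ε z := by
  rcases le_total 0 z with hz₀ | hz₀
  · rw [of_nonneg hz₀]
    nlinarith [mul_nonneg hz₀ (sub_nonneg.2 hz)]
  · exact (of_nonpos hz₀).ge

theorem abs_le_posPart_sq (hε : 0 ≤ ε) : |bellmanKernel ε z| ≤ (z + ε)⁺ ^ 2 / 2 := by
  rcases le_total 0 z with hz | hz
  · rw [of_nonneg hz, posPart_eq_self.2 (add_nonneg hz hε), abs_le]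
    constructor <;> nlinarith [mul_nonneg hε hz, sq_nonneg z, sq_nonneg ε]
  · rw [of_nonpos hz, abs_zero]
    positivity

end bellmanKernel

theorem le_mul_exp_neg_of_forall_mul_one_add_le {H : ℝ → ℝ} {ε u w : ℝ} (hε : 0 < ε)
    (hH : ∀ v, u ≤ v → ∀ δ, 0 ≤ δ → H (v + δ) * (1 + δ / ε) ≤ H v) (hw : u ≤ w) :
    H w ≤ H u * exp (-(w - u) / ε) := by
  have hiter : ∀ δ, 0 ≤ δ → ∀ n : ℕ, H (u + n * δ) * (1 + δ / ε) ^ n ≤ H u := by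
    intro δ hδ n
    induction n with
    | zero => simp
    | succ k ih =>
      calc H (u + (k + 1 : ℕ) * δ) * (1 + δ / ε) ^ (k + 1)
          = H (u + k * δ + δ) * (1 + δ / ε) * (1 + δ / ε) ^ k := by push_cast; ring_nf
        _ ≤ H (u + k * δ) * (1 + δ / ε) ^ k := by
            gcongr
            exact hH _ (le_add_of_nonneg_right (by positivity)) δ hδ
        _ ≤ H u := ih
  have hlim : H w * exp ((w - u) / ε) ≤ H u := by
    refine le_of_tendsto ((tendsto_one_add_div_pow_exp ((w - u) / ε)).const_mul (H w)) ?_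
    filter_upwards [eventually_gt_atTop 0] with n hn
    have hn' : (n : ℝ) ≠ 0 := by positivity
    have hstep := hiter ((w - u) / n) (div_nonneg (sub_nonneg.2 hw) n.cast_nonneg) n
    rwa [mul_div_cancel₀ _ hn', add_sub_cancel, div_right_comm] at hstep
  rwa [neg_div, exp_neg, ← div_eq_mul_inv, le_div_iff₀ (exp_pos _)]

namespace memBMOe

variable {ε l r c d u w : ℝ} {φ : ℝ → ℝ}

theorem intervalIntegrable (h : memBMOe ε l r φ) (hlc : l ≤ c) (hcd : c ≤ d) (hdr : d ≤ r) :
    IntervalIntegrable φ volume c d :=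
  (intervalIntegrable_iff_integrableOn_Ioo_of_le hcd).2 (h.1.mono_set (Ioo_subset_Ioo hlc hdr))

theorem intervalIntegrable_sq (h : memBMOe ε l r φ) (hlc : l ≤ c) (hcd : c ≤ d) (hdr : d ≤ r) :
    IntervalIntegrable (fun t => φ t ^ 2) volume c d :=
  (intervalIntegrable_iff_integrableOn_Ioo_of_le hcd).2 (h.2.1.mono_set (Ioo_subset_Ioo hlc hdr))

theorem memLp_posPart_sub (h : memBMOe ε l r φ) (w : ℝ) :
    MemLp (fun t => (φ t - w)⁺) 2 (volume.restrict (Ioo l r)) :=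
  (((memLp_two_iff_integrable_sq h.1.1).2 h.2.1).sub (memLp_const w)).pos_part

theorem integrableOn_posPart_sub (h : memBMOe ε l r φ) (w : ℝ) :
    IntegrableOn (fun t => (φ t - w)⁺) (Ioo l r) :=
  (h.memLp_posPart_sub w).integrable one_le_two

theorem integrableOn_posPart_sub_sq (h : memBMOe ε l r φ) (w : ℝ) :
    IntegrableOn (fun t => (φ t - w)⁺ ^ 2) (Ioo l r) :=
  (h.memLp_posPart_sub w).integrable_sq

theorem integrableOn_bellmanKernel (h : memBMOe ε l r φ) (w : ℝ) :
    IntegrableOn (fun t => bellmanKernel ε (φ t - w)) (Ioo l r) :=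
  ((h.integrableOn_posPart_sub w).const_mul ε).sub
    ((h.integrableOn_posPart_sub_sq w).div_const 2)

theorem intervalIntegral_bellmanKernel_nonneg (h : memBMOe ε l r φ) (hε : 0 ≤ ε) (hlc : l ≤ c)
    (hcd : c < d) (hdr : d ≤ r) (hmean : intAvg φ c d = w + ε) :
    0 ≤ ∫ t in c..d, bellmanKernel ε (φ t - w) := by
  have hφ := h.intervalIntegrable hlc hcd.le hdr
  have hφsq := h.intervalIntegrable_sq hlc hcd.le hdr
  have hsq := intervalIntegrable_sq_sub_const hφ hφsq (w + ε)
  have hvar : ∫ t in c..d, (φ t - (w + ε)) ^ 2 ≤ ε ^ 2 * (d - c) := by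
    have hosc := h.2.2 c d hlc hcd hdr
    rw [intAvg_sq_sub_intAvg_sq hcd hφ hφsq (w + ε), hmean, sub_self, zero_pow two_ne_zero,
      sub_zero, intAvg] at hosc
    exact (div_le_iff₀ (sub_pos.2 hcd)).1 hosc
  calc 0 ≤ (ε ^ 2 * (d - c) - ∫ t in c..d, (φ t - (w + ε)) ^ 2) / 2 := by linarith
    _ = ∫ t in c..d, (ε ^ 2 - (φ t - (w + ε)) ^ 2) / 2 := by
      rw [intervalIntegral.integral_div, intervalIntegral.integral_sub intervalIntegrable_const hsq,
        intervalIntegral.integral_const, smul_eq_mul, mul_comm (d - c)]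
    _ ≤ ∫ t in c..d, bellmanKernel ε (φ t - w) := by
      refine intervalIntegral.integral_mono_on hcd.le
        ((intervalIntegrable_const.sub hsq).div_const 2)
        ((intervalIntegrable_iff_integrableOn_Ioo_of_le hcd.le).2
          ((h.integrableOn_bellmanKernel w).mono_set (Ioo_subset_Ioo hlc hdr))) fun t _ => ?_
      refine le_of_eq_of_le ?_ (bellmanKernel.quadratic_le hε)
      ring

-- The rising sun lemma reduces the claim to intervals on which the mean of `φ` is exactly `w + ε`.
theorem integral_bellmanKernel_nonneg (h : memBMOe ε l r φ) (hε : 0 ≤ ε) (hlr : l < r)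
    (hmean : intAvg φ l r ≤ w + ε) : 0 ≤ ∫ t in Ioo l r, bellmanKernel ε (φ t - w) := by
  have hφ := h.intervalIntegrable le_rfl hlr.le le_rfl
  have hintegral : ∀ {c d}, l ≤ c → c ≤ d → d ≤ r →
      ∫ t in c..d, (φ t - (w + ε)) = (∫ t in c..d, φ t) - (w + ε) * (d - c) := by
    intro c d hlc hcd hdr
    rw [intervalIntegral.integral_sub (h.intervalIntegrable hlc hcd hdr) intervalIntegrable_const,
      intervalIntegral.integral_const, smul_eq_mul, mul_comm (d - c)]
  rw [← integral_Ioc_eq_integral_Ioo, ← intervalIntegral.integral_of_le hlr.le]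
  refine intervalIntegral_nonneg_of_integral_eq_zero_imp (φ := fun t => φ t - (w + ε)) hlr.le
    (hφ.sub intervalIntegrable_const)
    ((intervalIntegrable_iff_integrableOn_Ioo_of_le hlr.le).2 (h.integrableOn_bellmanKernel w))
    ?_ ?_ ?_
  · rw [hintegral le_rfl hlr.le le_rfl, sub_nonpos]
    exact (div_le_iff₀ (sub_pos.2 hlr)).1 hmean
  · exact fun t _ ht => bellmanKernel.nonneg (by linarith)
  · intro c d hlc hcd hdr hzero
    rw [hintegral hlc hcd.le hdr, sub_eq_zero] at hzero
    exact h.intervalIntegral_bellmanKernel_nonneg hε hlc hcd hdr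
      ((div_eq_iff (sub_pos.2 hcd).ne').2 hzero)

theorem integral_posPart_sub_sq_le (h : memBMOe ε l r φ) (hε : 0 ≤ ε) (hlr : l < r)
    (hmean : intAvg φ l r ≤ w + ε) :
    ∫ t in Ioo l r, (φ t - w)⁺ ^ 2 ≤ 2 * ε * ∫ t in Ioo l r, (φ t - w)⁺ := by
  have hnonneg := h.integral_bellmanKernel_nonneg hε hlr hmean
  simp only [bellmanKernel] at hnonneg
  rw [integral_sub ((h.integrableOn_posPart_sub w).const_mul ε)
    ((h.integrableOn_posPart_sub_sq w).div_const 2), integral_const_mul, integral_div] at hnonneg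
  linarith

theorem antitone_integral_posPart_sub_sq (h : memBMOe ε l r φ) :
    Antitone fun w => ∫ t in Ioo l r, (φ t - w)⁺ ^ 2 := fun v w hvw =>
  integral_mono (h.integrableOn_posPart_sub_sq w) (h.integrableOn_posPart_sub_sq v) fun _ =>
    pow_le_pow_left₀ (posPart_nonneg _) (posPart_mono (sub_le_sub_left hvw _)) 2

theorem integral_posPart_sub_sq_le_mul_exp (h : memBMOe ε l r φ) (hε : 0 < ε) (hlr : l < r)
    (hmean : intAvg φ l r ≤ u + ε) (hw : u ≤ w) :
    ∫ t in Ioo l r, (φ t - w)⁺ ^ 2 ≤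
      (∫ t in Ioo l r, (φ t - u)⁺ ^ 2) * exp (-(w - u) / ε) := by
  refine le_mul_exp_neg_of_forall_mul_one_add_le
    (H := fun v => ∫ t in Ioo l r, (φ t - v)⁺ ^ 2) hε (fun v hv δ hδ => ?_) hw
  have hint := h.integrableOn_posPart_sub (v + δ)
  have hintSq := h.integrableOn_posPart_sub_sq (v + δ)
  have hpointwise : ∀ z : ℝ, (z - δ)⁺ ^ 2 + 2 * δ * (z - δ)⁺ ≤ z⁺ ^ 2 := fun z => by
    rcases le_total 0 (z - δ) with hz | hz
    · rw [posPart_eq_self.2 hz, posPart_eq_self.2 (by linarith)]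
      nlinarith
    · rw [posPart_eq_zero.2 hz]
      nlinarith [sq_nonneg z⁺]
  calc (∫ t in Ioo l r, (φ t - (v + δ))⁺ ^ 2) * (1 + δ / ε)
      = (∫ t in Ioo l r, (φ t - (v + δ))⁺ ^ 2)
          + (∫ t in Ioo l r, (φ t - (v + δ))⁺ ^ 2) * (δ / ε) := by ring
    _ ≤ (∫ t in Ioo l r, (φ t - (v + δ))⁺ ^ 2)
          + (2 * ε * ∫ t in Ioo l r, (φ t - (v + δ))⁺) * (δ / ε) := by
        gcongr
        exact h.integral_posPart_sub_sq_le hε.le hlr (by linarith)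
    _ = ∫ t in Ioo l r, ((φ t - (v + δ))⁺ ^ 2 + 2 * δ * (φ t - (v + δ))⁺) := by
        rw [integral_add hintSq (hint.const_mul _), integral_const_mul]
        field_simp
    _ ≤ ∫ t in Ioo l r, (φ t - v)⁺ ^ 2 := by
        refine integral_mono (hintSq.add (hint.const_mul _)) (h.integrableOn_posPart_sub_sq v)
          fun t => ?_
        simpa only [sub_sub] using hpointwise (φ t - v)

theorem exists_integral_abs_bellmanKernel_le (h : memBMOe ε l r φ) (hε : 0 < ε) (hlr : l < r)
    (hmean : intAvg φ l r ≤ u + ε) :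
    ∃ C, ∀ w, u ≤ w → ∫ t in Ioo l r, |bellmanKernel ε (φ t - w)| ≤ C * exp (-w / ε) := by
  set H : ℝ → ℝ := fun w => ∫ t in Ioo l r, (φ t - w)⁺ ^ 2
  have hHnonneg : ∀ w, 0 ≤ H w := fun w => integral_nonneg fun _ => sq_nonneg _
  have hHanti : Antitone H := h.antitone_integral_posPart_sub_sq
  have hdecay : ∀ w, u ≤ w → H (w - ε) ≤ H (u - ε) * exp (-(w - ε - u) / ε) := by
    intro w hw
    rcases le_total u (w - ε) with huw | huw
    · calc H (w - ε) ≤ H u * exp (-(w - ε - u) / ε) :=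
            h.integral_posPart_sub_sq_le_mul_exp hε hlr hmean huw
        _ ≤ H (u - ε) * exp (-(w - ε - u) / ε) := by
            gcongr
            exact hHanti (by linarith)
    · calc H (w - ε) ≤ H (u - ε) := hHanti (by linarith)
        _ ≤ H (u - ε) * exp (-(w - ε - u) / ε) :=
            le_mul_of_one_le_right (hHnonneg _)
              (one_le_exp (div_nonneg (by linarith) hε.le))
  refine ⟨H (u - ε) / 2 * exp ((u + ε) / ε), fun w hw => ?_⟩
  calc ∫ t in Ioo l r, |bellmanKernel ε (φ t - w)|
      ≤ ∫ t in Ioo l r, (φ t - (w - ε))⁺ ^ 2 / 2 := by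
        refine integral_mono (h.integrableOn_bellmanKernel w).abs
          ((h.integrableOn_posPart_sub_sq (w - ε)).div_const 2) fun t => ?_
        simpa only [sub_sub_eq_add_sub, sub_add_eq_add_sub] using
          bellmanKernel.abs_le_posPart_sq (z := φ t - w) hε.le
    _ = H (w - ε) / 2 := integral_div _ _
    _ ≤ H (u - ε) * exp (-(w - ε - u) / ε) / 2 := by linarith [hdecay w hw]
    _ = H (u - ε) / 2 * exp ((u + ε) / ε) * exp (-w / ε) := by
        rw [mul_assoc, ← exp_add, ← add_div]
        ring_nf

theorem integrable_prod_mul_bellmanKernel (h : memBMOe ε l r φ) (hε : 0 < ε) (hlr : l < r)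
    (hmean : intAvg φ l r ≤ u + ε) {q : ℝ → ℝ}
    (hq : IntegrableOn (fun w => q w * exp (-w / ε)) (Ioi u)) :
    Integrable (fun p : ℝ × ℝ => q p.2 * bellmanKernel ε (φ p.1 - p.2))
      ((volume.restrict (Ioo l r)).prod (volume.restrict (Ioi u))) := by
  have hqmeas : AEStronglyMeasurable q (volume.restrict (Ioi u)) := by
    have hexp : Continuous fun w : ℝ => exp (w / ε) := by fun_prop
    refine (hq.1.mul hexp.aestronglyMeasurable).congr (.of_forall fun w => ?_)
    simp only [Pi.mul_apply, mul_assoc, ← exp_add, neg_div, neg_add_cancel, exp_zero, mul_one]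
  have hmeas : AEStronglyMeasurable (fun p : ℝ × ℝ => q p.2 * bellmanKernel ε (φ p.1 - p.2))
      ((volume.restrict (Ioo l r)).prod (volume.restrict (Ioi u))) :=
    hqmeas.comp_snd.mul (bellmanKernel.continuous.comp_aestronglyMeasurable
      (h.1.1.comp_fst.sub continuous_snd.aestronglyMeasurable))
  obtain ⟨C, hC⟩ := h.exists_integral_abs_bellmanKernel_le hε hlr hmean
  refine (integrable_prod_iff' hmeas).2
    ⟨.of_forall fun w => (h.integrableOn_bellmanKernel w).const_mul (q w), ?_⟩
  refine (hq.abs.const_mul C).mono' hmeas.norm.prod_swap.integral_prod_right' ?_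
  filter_upwards [ae_restrict_mem measurableSet_Ioi] with w hw
  simp only [norm_eq_abs, abs_mul, abs_exp, integral_const_mul, abs_abs]
  rw [abs_of_nonneg (integral_nonneg fun _ => abs_nonneg _), mul_left_comm]
  exact mul_le_mul_of_nonneg_left (hC w (le_of_lt hw)) (abs_nonneg _)

theorem integral_integral_mul_bellmanKernel_nonneg (h : memBMOe ε l r φ) (hε : 0 < ε)
    (hlr : l < r) (hmean : intAvg φ l r ≤ u + ε) {q : ℝ → ℝ}
    (hq : IntegrableOn (fun w => q w * exp (-w / ε)) (Ioi u)) (hqnonneg : ∀ w, u < w → 0 ≤ q w) :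
    0 ≤ ∫ t in Ioo l r, ∫ w in Ioi u, q w * bellmanKernel ε (φ t - w) := by
  rw [integral_integral_swap (h.integrable_prod_mul_bellmanKernel hε hlr hmean hq)]
  refine setIntegral_nonneg measurableSet_Ioi fun w hw => ?_
  rw [integral_const_mul]
  exact mul_nonneg (hqnonneg w hw)
    (h.integral_bellmanKernel_nonneg hε.le hlr (by linarith [mem_Ioi.1 hw]))

end memBMOe

/-! ### Exponential averages -/

theorem integral_mul_deriv_eq_of_eq_add_primitive {F F' g : ℝ → ℝ} {a b : ℝ}
    (hF' : IntervalIntegrable F' volume a b)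
    (hF : ∀ x ∈ uIcc a b, F x = F a + ∫ t in a..x, F' t)
    (hg : AbsolutelyContinuousOnInterval g a b) :
    ∫ t in a..b, F t * deriv g t = F b * g b - F a * g a - ∫ t in a..b, F' t * g t := by
  set G : ℝ → ℝ := fun x => F a + ∫ t in a..x, F' t
  have hG : AbsolutelyContinuousOnInterval G a b :=
    (contDiffOn_const.absolutelyContinuousOnInterval).add
      (hF'.absolutelyContinuousOnInterval_intervalIntegral left_mem_uIcc)
  have hderiv : ∫ t in a..b, deriv G t * g t = ∫ t in a..b, F' t * g t := by
    refine intervalIntegral.integral_congr_ae ?_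
    filter_upwards [hF'.ae_hasDerivAt_integral] with t ht htab
    rw [((ht (uIoc_subset_uIcc htab) a left_mem_uIcc).const_add (F a)).deriv]
  have hFG : ∫ t in a..b, F t * deriv g t = ∫ t in a..b, G t * deriv g t :=
    intervalIntegral.integral_congr fun t ht => by simp only [hF t ht, G]
  rw [hFG, hG.integral_mul_deriv_eq_deriv_mul hg, hderiv, hF b right_mem_uIcc]
  simp only [G, intervalIntegral.integral_same, add_zero]

theorem integrableOn_Ici_mul_exp_neg {ε ε₀ : ℝ} (hε : 0 < ε) (hεε₀ : ε ≤ ε₀) {k : ℝ → ℝ}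
    (hk : Integrable (fun t => k t * exp (-|t| / ε₀))) (w : ℝ) :
    IntegrableOn (fun t => k t * exp (-t / ε)) (Ici w) := by
  have hsplit : (fun t => k t * exp (-t / ε)) =
      fun t => k t * exp (-|t| / ε₀) * exp (|t| / ε₀ - t / ε) := by
    funext t
    rw [mul_assoc, ← exp_add]
    ring_nf
  have hbound : ∀ t ∈ Ici w, ‖exp (|t| / ε₀ - t / ε)‖ ≤ exp (|w| / ε₀ - w / ε) := by
    intro t (hwt : w ≤ t)
    have habs : |t| - |w| ≤ t - w := by
      simpa only [abs_of_nonneg (sub_nonneg.2 hwt)] using abs_sub_abs_le_abs_sub t w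
    have hdiv : (|t| - |w|) / ε₀ ≤ (t - w) / ε :=
      div_le_div₀ (sub_nonneg.2 hwt) habs hε hεε₀
    rw [norm_eq_abs, abs_exp, exp_le_exp]
    rw [sub_div, sub_div] at hdiv
    linarith
  rw [hsplit]
  exact hk.integrableOn.mul_bdd (Continuous.aestronglyMeasurable (by fun_prop))
    (ae_restrict_of_forall_mem measurableSet_Ici hbound)

theorem exp_div_mul_exp_neg_div {ε w : ℝ} : exp (w / ε) * exp (-w / ε) = 1 := by
  rw [← exp_add, neg_div, add_neg_cancel, exp_zero]

theorem intervalIntegrable_of_mul_exp_neg {ε a b : ℝ} {k : ℝ → ℝ}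
    (hk : IntervalIntegrable (fun t => k t * exp (-t / ε)) volume a b) :
    IntervalIntegrable k volume a b := by
  have hcont : Continuous fun t : ℝ => exp (t / ε) := by fun_prop
  refine (hk.mul_continuousOn hcont.continuousOn).congr fun t _ => ?_
  simp only [mul_assoc, mul_comm (exp (-t / ε)), exp_div_mul_exp_neg_div, mul_one]

theorem eq_zero_of_tendsto_atTop_of_integrableOn_Ici {g : ℝ → ℝ} {a L : ℝ}
    (hg : IntegrableOn g (Ici a)) (hL : Tendsto g atTop (𝓝 L)) : L = 0 := by
  refine IntegrableAtFilter.eq_zero_of_tendsto ⟨Ici a, Ici_mem_atTop a, hg⟩ (fun s hs => ?_) hL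
  obtain ⟨b, hb⟩ := mem_atTop_sets.1 hs
  exact measure_mono_top hb volume_Ici

theorem integral_Ici_eq_sub_intervalIntegral {g : ℝ → ℝ} (hg : ∀ w, IntegrableOn g (Ici w))
    (a w : ℝ) : ∫ t in Ici w, g t = (∫ t in Ici a, g t) - ∫ t in a..w, g t := by
  rw [integral_Ici_eq_integral_Ioi, integral_Ici_eq_integral_Ioi, eq_sub_iff_add_eq',
    intervalIntegral.integral_interval_add_Ioi ((hg a).mono_set Ioi_subset_Ici_self)
      ((hg w).mono_set Ioi_subset_Ici_self)]

/-- The average of `k` over `[w, ∞)` against the probability density `ε⁻¹ * exp ((w - t) / ε)`.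
The slope `m_L` of the Bellman candidate is `expAvg ε (deriv f)`. -/
noncomputable def expAvg (ε : ℝ) (k : ℝ → ℝ) (w : ℝ) : ℝ :=
  ε⁻¹ * exp (w / ε) * ∫ t in Ici w, k t * exp (-t / ε)

namespace expAvg

variable {ε : ℝ} {k k' : ℝ → ℝ} {u w : ℝ}

theorem mul_exp_neg : expAvg ε k w * exp (-w / ε) = ε⁻¹ * ∫ t in Ici w, k t * exp (-t / ε) := by
  rw [expAvg, mul_right_comm, mul_assoc ε⁻¹, exp_div_mul_exp_neg_div, mul_one]

theorem continuous (hk : ∀ w, IntegrableOn (fun t => k t * exp (-t / ε)) (Ici w)) :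
    Continuous (expAvg ε k) := by
  have hint : ∀ a b, IntervalIntegrable (fun t => k t * exp (-t / ε)) volume a b := fun a b =>
    ((hk (min a b)).mono_set Icc_subset_Ici_self).intervalIntegrable
  have htail := intervalIntegral.continuous_primitive hint 0
  have htail_eq := funext (integral_Ici_eq_sub_intervalIntegral hk 0)
  exact (by fun_prop : Continuous fun w => ε⁻¹ * exp (w / ε)).mul
    (htail_eq ▸ continuous_const.sub htail)

theorem hasDerivAt (hk : ∀ w, IntegrableOn (fun t => k t * exp (-t / ε)) (Ici w))
    (hcont : Continuous k) (w : ℝ) :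
    HasDerivAt (expAvg ε k) ((expAvg ε k w - k w) / ε) w := by
  have htail : HasDerivAt (fun x => ∫ t in Ici x, k t * exp (-t / ε))
      (-(k w * exp (-w / ε))) w := by
    rw [funext (integral_Ici_eq_sub_intervalIntegral hk w)]
    exact ((Continuous.integral_hasStrictDerivAt (by fun_prop) w w).hasDerivAt).const_sub _
  have hfactor : HasDerivAt (fun x => ε⁻¹ * exp (x / ε)) (ε⁻¹ * (exp (w / ε) * (1 / ε))) w :=
    ((hasDerivAt_id w).div_const ε).exp.const_mul _
  refine (hfactor.mul htail).congr_deriv ?_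
  rw [expAvg]
  linear_combination -ε⁻¹ * k w * exp_div_mul_exp_neg_div (ε := ε) (w := w)

theorem intervalIntegral_mul_exp_neg (hε : ε ≠ 0) {y : ℝ} (hk' : IntervalIntegrable k' volume w y)
    (hprim : ∀ x ∈ uIcc w y, k x = k w + ∫ t in w..x, k' t) :
    ∫ t in w..y, k t * exp (-t / ε) =
      ε * (k w * exp (-w / ε) - k y * exp (-y / ε) + ∫ t in w..y, k' t * exp (-t / ε)) := by
  have hderiv : ∀ t : ℝ, HasDerivAt (fun t => exp (-t / ε)) (exp (-t / ε) * (-1 / ε)) t :=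
    fun t => ((hasDerivAt_id t).neg.div_const ε).exp
  have hparts := integral_mul_deriv_eq_of_eq_add_primitive hk' hprim
    (g := fun t => exp (-t / ε)) (ContDiffOn.absolutelyContinuousOnInterval (by fun_prop))
  simp_rw [fun t => (hderiv t).deriv, ← mul_assoc, intervalIntegral.integral_mul_const] at hparts
  have hinv : ε * (-1 / ε) = -1 := mul_div_cancel₀ _ hε
  linear_combination (-ε) * hparts + (∫ t in w..y, k t * exp (-t / ε)) * hinv

theorem eq_add (hε : ε ≠ 0) (hk : IntegrableOn (fun t => k t * exp (-t / ε)) (Ici w))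
    (hk' : IntegrableOn (fun t => k' t * exp (-t / ε)) (Ici w))
    (hprim : ∀ y, w ≤ y → k y - k w = ∫ t in w..y, k' t) :
    expAvg ε k w = k w + ε * expAvg ε k' w := by
  have hk'_int : ∀ y, w ≤ y → IntervalIntegrable k' volume w y := fun y hwy =>
    intervalIntegrable_of_mul_exp_neg <| (intervalIntegrable_iff_integrableOn_Icc_of_le hwy).2
      (hk'.mono_set Icc_subset_Ici_self)
  set L : ℝ := k w * exp (-w / ε) + (∫ t in Ici w, k' t * exp (-t / ε)) -
    ε⁻¹ * ∫ t in Ici w, k t * exp (-t / ε) with hL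
  have htendsto : Tendsto (fun y => k y * exp (-y / ε)) atTop (𝓝 L) := by
    have hlim : ∀ {g : ℝ → ℝ}, IntegrableOn g (Ici w) →
        Tendsto (fun y => ∫ t in w..y, g t) atTop (𝓝 (∫ t in Ici w, g t)) := fun hg => by
      rw [integral_Ici_eq_integral_Ioi]
      exact intervalIntegral_tendsto_integral_Ioi w (hg.mono_set Ioi_subset_Ici_self) tendsto_id
    refine (((hlim hk').const_add _).sub ((hlim hk).const_mul ε⁻¹)).congr' ?_
    filter_upwards [eventually_ge_atTop w] with y hwy
    have hparts := intervalIntegral_mul_exp_neg hε (hk'_int y hwy) (k := k) fun x hx =>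
      sub_eq_iff_eq_add'.1 (hprim x (uIcc_of_le hwy ▸ hx).1)
    rw [hparts, inv_mul_cancel_left₀ hε]
    ring
  have hL_zero : L = 0 := eq_zero_of_tendsto_atTop_of_integrableOn_Ici hk htendsto
  have hcancel : ε * ε⁻¹ = 1 := mul_inv_cancel₀ hε
  rw [expAvg, expAvg]
  linear_combination -exp (w / ε) * (hL.symm.trans hL_zero) +
    k w * exp_div_mul_exp_neg_div (ε := ε) (w := w) -
    exp (w / ε) * (∫ t in Ici w, k' t * exp (-t / ε)) * hcancel

theorem integrableOn_mul_exp_neg {ε₀ : ℝ} (hε : 0 < ε) (hεε₀ : ε < ε₀)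
    (hk : ∀ w, IntegrableOn (fun t => k t * exp (-t / ε)) (Ici w))
    (hk₀ : IntegrableOn (fun t => k t * exp (-t / ε₀)) (Ici u)) :
    IntegrableOn (fun w => expAvg ε k w * exp (-w / ε)) (Ioi u) := by
  set C : ℝ := ∫ t in Ici u, ‖k t * exp (-t / ε₀)‖
  have hrate : ε₀⁻¹ - ε⁻¹ < 0 := sub_neg.2 (inv_strictAnti₀ hε hεε₀)
  have htail : ∀ w ∈ Ioi u, ‖∫ t in Ici w, k t * exp (-t / ε)‖ ≤ C * exp ((ε₀⁻¹ - ε⁻¹) * w) := by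
    intro w (huw : u < w)
    have hsub : Ici w ⊆ Ici u := Ici_subset_Ici.2 huw.le
    calc ‖∫ t in Ici w, k t * exp (-t / ε)‖
        ≤ ∫ t in Ici w, ‖k t * exp (-t / ε₀)‖ * exp ((ε₀⁻¹ - ε⁻¹) * w) := by
          refine norm_integral_le_of_norm_le ((hk₀.mono_set hsub).norm.mul_const _)
            (ae_restrict_of_forall_mem measurableSet_Ici fun t (hwt : w ≤ t) => ?_)
          rw [norm_mul, norm_mul, mul_assoc, norm_eq_abs (exp _), norm_eq_abs (exp _), abs_exp,
            abs_exp, ← exp_add]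
          gcongr
          have := mul_le_mul_of_nonpos_left hwt hrate.le
          rw [neg_div, neg_div, div_eq_mul_inv, div_eq_mul_inv]
          linarith
      _ = (∫ t in Ici w, ‖k t * exp (-t / ε₀)‖) * exp ((ε₀⁻¹ - ε⁻¹) * w) :=
          integral_mul_const _ _
      _ ≤ C * exp ((ε₀⁻¹ - ε⁻¹) * w) := by
          gcongr
          exact setIntegral_mono_set hk₀.norm (.of_forall fun _ => norm_nonneg _) hsub.eventuallyLE
  have hmeas : AEStronglyMeasurable (fun w => expAvg ε k w * exp (-w / ε))
      (volume.restrict (Ioi u)) :=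
    ((continuous hk).mul (by fun_prop)).aestronglyMeasurable
  refine (((integrableOn_exp_mul_Ioi hrate u).const_mul C).const_mul ε⁻¹).mono' hmeas
    (ae_restrict_of_forall_mem measurableSet_Ioi fun w hw => ?_)
  rw [mul_exp_neg, norm_mul, norm_eq_abs ε⁻¹, abs_of_pos (inv_pos.2 hε)]
  exact mul_le_mul_of_nonneg_left (htail w hw) (inv_pos.2 hε).le

end expAvg

/-! ### The upper bound -/

namespace memWcl

variable {ε ε₀ : ℝ} {f f3 : ℝ → ℝ}

theorem contDiff_deriv (hf : memWcl ε₀ f f3) : ContDiff ℝ 1 (deriv f) :=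
  (contDiff_succ_iff_deriv.1 (one_add_one_eq_two (R := WithTop ℕ∞) ▸ hf.1)).2.2

theorem integrableOn_mul_exp_neg (hf : memWcl ε₀ f f3) (hε : 0 < ε) (hεε₀ : ε ≤ ε₀) (w : ℝ) :
    IntegrableOn (fun t => f t * exp (-t / ε)) (Ici w) :=
  integrableOn_Ici_mul_exp_neg hε hεε₀ hf.2.2.1 w

theorem integrableOn_deriv_mul_exp_neg (hf : memWcl ε₀ f f3) (hε : 0 < ε) (hεε₀ : ε ≤ ε₀)
    (w : ℝ) : IntegrableOn (fun t => deriv f t * exp (-t / ε)) (Ici w) :=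
  integrableOn_Ici_mul_exp_neg hε hεε₀ hf.2.2.2.1 w

theorem integrableOn_deriv2_mul_exp_neg (hf : memWcl ε₀ f f3) (hε : 0 < ε) (hεε₀ : ε ≤ ε₀)
    (w : ℝ) : IntegrableOn (fun t => deriv (deriv f) t * exp (-t / ε)) (Ici w) :=
  integrableOn_Ici_mul_exp_neg hε hεε₀ hf.2.2.2.2.1 w

theorem integrableOn_deriv3_mul_exp_neg (hf : memWcl ε₀ f f3) (hε : 0 < ε) (hεε₀ : ε ≤ ε₀)
    (w : ℝ) : IntegrableOn (fun t => f3 t * exp (-t / ε)) (Ici w) :=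
  integrableOn_Ici_mul_exp_neg hε hεε₀ hf.2.2.2.2.2 w

theorem expAvg_eq (hf : memWcl ε₀ f f3) (hε : 0 < ε) (hεε₀ : ε ≤ ε₀) (w : ℝ) :
    expAvg ε f w = f w + ε * expAvg ε (deriv f) w :=
  expAvg.eq_add hε.ne' (hf.integrableOn_mul_exp_neg hε hεε₀ w)
    (hf.integrableOn_deriv_mul_exp_neg hε hεε₀ w) fun _ _ =>
    (intervalIntegral.integral_deriv_eq_sub (fun t _ => hf.1.differentiable two_ne_zero t)
      (hf.contDiff_deriv.continuous.intervalIntegrable _ _)).symm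

theorem expAvg_deriv_eq (hf : memWcl ε₀ f f3) (hε : 0 < ε) (hεε₀ : ε ≤ ε₀) (w : ℝ) :
    expAvg ε (deriv f) w = deriv f w + ε * expAvg ε (deriv (deriv f)) w :=
  expAvg.eq_add hε.ne' (hf.integrableOn_deriv_mul_exp_neg hε hεε₀ w)
    (hf.integrableOn_deriv2_mul_exp_neg hε hεε₀ w) fun _ _ =>
    (intervalIntegral.integral_deriv_eq_sub
      (fun t _ => hf.contDiff_deriv.differentiable one_ne_zero t)
      ((hf.contDiff_deriv.continuous_deriv le_rfl).intervalIntegrable _ _)).symm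

theorem expAvg_deriv2_eq (hf : memWcl ε₀ f f3) (hε : 0 < ε) (hεε₀ : ε ≤ ε₀) (w : ℝ) :
    expAvg ε (deriv (deriv f)) w = deriv (deriv f) w + ε * expAvg ε f3 w :=
  expAvg.eq_add hε.ne' (hf.integrableOn_deriv2_mul_exp_neg hε hεε₀ w)
    (hf.integrableOn_deriv3_mul_exp_neg hε hεε₀ w) fun y hwy => hf.2.1 w y hwy

theorem hasDerivAt (hf : memWcl ε₀ f f3) (hε : 0 < ε) (hεε₀ : ε ≤ ε₀) (w : ℝ) :
    HasDerivAt f (expAvg ε (deriv f) w - ε * expAvg ε (deriv (deriv f)) w) w :=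
  (hf.1.differentiable two_ne_zero w).hasDerivAt.congr_deriv
    (eq_sub_of_add_eq (hf.expAvg_deriv_eq hε hεε₀ w).symm)

theorem hasDerivAt_expAvg_deriv (hf : memWcl ε₀ f f3) (hε : 0 < ε) (hεε₀ : ε ≤ ε₀) (w : ℝ) :
    HasDerivAt (expAvg ε (deriv f)) (expAvg ε (deriv (deriv f)) w) w := by
  refine (expAvg.hasDerivAt (hf.integrableOn_deriv_mul_exp_neg hε hεε₀)
    hf.contDiff_deriv.continuous w).congr_deriv ?_
  rw [hf.expAvg_deriv_eq hε hεε₀, add_sub_cancel_left, mul_div_cancel_left₀ _ hε.ne']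

theorem hasDerivAt_expAvg_deriv2 (hf : memWcl ε₀ f f3) (hε : 0 < ε) (hεε₀ : ε ≤ ε₀) (w : ℝ) :
    HasDerivAt (expAvg ε (deriv (deriv f))) (expAvg ε f3 w) w := by
  refine (expAvg.hasDerivAt (hf.integrableOn_deriv2_mul_exp_neg hε hεε₀)
    (hf.contDiff_deriv.continuous_deriv le_rfl) w).congr_deriv ?_
  rw [hf.expAvg_deriv2_eq hε hεε₀, add_sub_cancel_left, mul_div_cancel_left₀ _ hε.ne']

end memWcl

theorem taylor_eq_sub_integral_mul_quadratic {ε : ℝ} {f m p q : ℝ → ℝ} (hq : Continuous q)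
    (hf : ∀ w, HasDerivAt f (m w - ε * p w) w) (hm : ∀ w, HasDerivAt m (p w) w)
    (hp : ∀ w, HasDerivAt p (q w) w) (u v : ℝ) :
    f v = f u + m u * (v - u) - p u * (ε * (v - u) - (v - u) ^ 2 / 2) -
      ∫ w in u..v, q w * (ε * (v - w) - (v - w) ^ 2 / 2) := by
  have hderiv : ∀ w ∈ uIcc u v, HasDerivAt
      (fun w => p w * (ε * (v - w) - (v - w) ^ 2 / 2) - m w * (v - w) - f w)
      (q w * (ε * (v - w) - (v - w) ^ 2 / 2)) w := fun w _ => by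
    have hsub : HasDerivAt (fun w => v - w) (-1) w := (hasDerivAt_id w).const_sub v
    refine ((((hp w).mul ((hsub.const_mul ε).sub ((hsub.pow 2).div_const 2))).sub
      ((hm w).mul hsub)).sub (hf w)).congr_deriv ?_
    simp only [Pi.sub_apply, Pi.pow_apply]
    ring
  rw [intervalIntegral.integral_eq_sub_of_hasDerivAt hderiv
    (Continuous.intervalIntegrable (by fun_prop) _ _)]
  ring

theorem integral_mul_bellmanKernel_le {ε : ℝ} (hε : 0 ≤ ε) {q : ℝ → ℝ} (hq : ∀ w, 0 ≤ q w)
    (u v : ℝ) : ∫ w in Ioi u, q w * bellmanKernel ε (v - w) ≤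
      ∫ w in u..v, q w * (ε * (v - w) - (v - w) ^ 2 / 2) := by
  have hzero : ∀ w, v ≤ w → q w * bellmanKernel ε (v - w) = 0 := fun w hvw => by
    rw [bellmanKernel.of_nonpos (sub_nonpos.2 hvw), mul_zero]
  rcases le_total u v with huv | hvu
  · rw [intervalIntegral.integral_of_le huv, setIntegral_eq_of_subset_of_forall_sdiff_eq_zero
      measurableSet_Ioi (Ioc_subset_Ioi_self : Ioc u v ⊆ Ioi u)]
    · exact (setIntegral_congr_fun measurableSet_Ioc fun w hw => by
        simp only [bellmanKernel.of_nonneg (sub_nonneg.2 hw.2)]).le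
    · exact fun w ⟨huw, hw⟩ => hzero w (not_le.1 fun hwv => hw ⟨huw, hwv⟩).le
  · rw [setIntegral_eq_zero_of_forall_eq_zero fun w (hw : w ∈ Ioi u) =>
        hzero w (hvu.trans (le_of_lt hw)), intervalIntegral.integral_symm,
      ← intervalIntegral.integral_neg]
    refine intervalIntegral.integral_nonneg hvu fun w hw => ?_
    nlinarith [mul_nonneg (hq w) (mul_nonneg hε (sub_nonneg.2 hw.1)),
      mul_nonneg (hq w) (sq_nonneg (v - w))]

theorem integral_Ioo_eq_sub_mul_intAvg {l r : ℝ} (hlr : l < r) (g : ℝ → ℝ) :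
    ∫ t in Ioo l r, g t = (r - l) * intAvg g l r := by
  rw [intAvg, mul_div_cancel₀ _ (sub_pos.2 hlr).ne', intervalIntegral.integral_of_le hlr.le,
    integral_Ioc_eq_integral_Ioo]

theorem memBMOe.intAvg_comp_le {ε l r u A M P : ℝ} {φ f q : ℝ → ℝ} (h : memBMOe ε l r φ)
    (hε : 0 < ε) (hlr : l < r) (hmean : intAvg φ l r ≤ u + ε)
    (hfφ : IntegrableOn (fun t => f (φ t)) (Ioo l r))
    (hq : IntegrableOn (fun w => q w * exp (-w / ε)) (Ioi u)) (hqnonneg : ∀ w, u < w → 0 ≤ q w)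
    (hf : ∀ v, f v ≤ A + M * (v - u) - P * (ε * (v - u) - (v - u) ^ 2 / 2) -
      ∫ w in Ioi u, q w * bellmanKernel ε (v - w)) :
    intAvg (fun t => f (φ t)) l r ≤ A + M * (intAvg φ l r - u) -
      P * (ε * (intAvg φ l r - u) - intAvg (fun t => (φ t - u) ^ 2) l r / 2) := by
  have hφ : IntegrableOn (fun t => φ t - u) (Ioo l r) := h.1.sub (integrable_const u)
  have hφsq : IntegrableOn (fun t => (φ t - u) ^ 2) (Ioo l r) :=
    (((memLp_two_iff_integrable_sq h.1.1).2 h.2.1).sub (memLp_const u)).integrable_sq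
  have hquad : IntegrableOn (fun t => ε * (φ t - u) - (φ t - u) ^ 2 / 2) (Ioo l r) :=
    (hφ.const_mul ε).sub (hφsq.div_const 2)
  have hlin : IntegrableOn (fun t => A + M * (φ t - u)) (Ioo l r) :=
    (integrable_const A).add (hφ.const_mul M)
  have htaylor : IntegrableOn (fun t => A + M * (φ t - u) -
      P * (ε * (φ t - u) - (φ t - u) ^ 2 / 2)) (Ioo l r) := hlin.sub (hquad.const_mul P)
  have hrem : IntegrableOn (fun t => ∫ w in Ioi u, q w * bellmanKernel ε (φ t - w)) (Ioo l r) :=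
    (h.integrable_prod_mul_bellmanKernel hε hlr hmean hq).integral_prod_left
  have hmono : ∫ t in Ioo l r, f (φ t) ≤ ∫ t in Ioo l r, (A + M * (φ t - u) -
      P * (ε * (φ t - u) - (φ t - u) ^ 2 / 2) -
        ∫ w in Ioi u, q w * bellmanKernel ε (φ t - w)) :=
    integral_mono hfφ (htaylor.sub hrem) fun t => hf (φ t)
  have hrem_nonneg := h.integral_integral_mul_bellmanKernel_nonneg hε hlr hmean hq hqnonneg
  rw [integral_sub htaylor hrem, integral_sub hlin (hquad.const_mul P),
    integral_add (integrable_const A) (hφ.const_mul M), integral_const_mul, integral_const_mul,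
    integral_sub (hφ.const_mul ε) (hφsq.div_const 2), integral_const_mul, integral_div,
    integral_sub h.1 (integrable_const u), setIntegral_const, setIntegral_const,
    volume_real_Ioo_of_le hlr.le, integral_Ioo_eq_sub_mul_intAvg hlr,
    integral_Ioo_eq_sub_mul_intAvg hlr, integral_Ioo_eq_sub_mul_intAvg hlr, smul_eq_mul,
    smul_eq_mul] at hmono
  refine le_of_mul_le_mul_left ?_ (sub_pos.2 hlr)
  linarith

namespace uLpt

variable {ε : ℝ} {x : ℝ × ℝ}

theorem le_fst (hε : 0 ≤ ε) (hx : x ∈ parabStrip ε) : uLpt ε x ≤ x.1 := by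
  have hsqrt : √(ε ^ 2 - (x.2 - x.1 ^ 2)) ≤ ε := sqrt_le_iff.2 ⟨hε, by linarith [hx.1]⟩
  rw [uLpt]
  linarith

theorem fst_le_add : x.1 ≤ uLpt ε x + ε := by
  rw [uLpt]
  linarith [sqrt_nonneg (ε ^ 2 - (x.2 - x.1 ^ 2))]

theorem snd_sub_sq_fst (hx : x ∈ parabStrip ε) :
    x.2 - x.1 ^ 2 = 2 * ε * (x.1 - uLpt ε x) - (x.1 - uLpt ε x) ^ 2 := by
  have hsqrt : √(ε ^ 2 - (x.2 - x.1 ^ 2)) ^ 2 = ε ^ 2 - (x.2 - x.1 ^ 2) :=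
    sq_sqrt (by linarith [hx.2])
  rw [uLpt]
  linear_combination hsqrt

end uLpt

theorem memWcl.intAvg_comp_le {ε ε₀ : ℝ} {f f3 φ : ℝ → ℝ} {x : ℝ × ℝ} (hf : memWcl ε₀ f f3)
    (hε : 0 < ε) (hεε₀ : ε < ε₀) (hnonneg : ∀ w, 0 ≤ expAvg ε f3 w) (hx : x ∈ parabStrip ε)
    (hφ : memBMOe ε 0 1 φ) (hfφ : IntegrableOn (fun t => f (φ t)) (Ioo 0 1))
    (hx₁ : intAvg φ 0 1 = x.1) (hx₂ : intAvg (fun t => φ t ^ 2) 0 1 = x.2) :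
    intAvg (fun t => f (φ t)) 0 1 ≤
      f (uLpt ε x) + expAvg ε (deriv f) (uLpt ε x) * (x.1 - uLpt ε x) := by
  set u := uLpt ε x
  have hint := hf.integrableOn_deriv3_mul_exp_neg hε hεε₀.le
  have hpointwise : ∀ v, f v ≤ f u + expAvg ε (deriv f) u * (v - u) -
      expAvg ε (deriv (deriv f)) u * (ε * (v - u) - (v - u) ^ 2 / 2) -
        ∫ w in Ioi u, expAvg ε f3 w * bellmanKernel ε (v - w) := fun v =>
    (taylor_eq_sub_integral_mul_quadratic (expAvg.continuous hint)
      (hf.hasDerivAt hε hεε₀.le) (hf.hasDerivAt_expAvg_deriv hε hεε₀.le)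
      (hf.hasDerivAt_expAvg_deriv2 hε hεε₀.le) u v).trans_le
      (sub_le_sub_left (integral_mul_bellmanKernel_le hε.le hnonneg u v) _)
  have hbound := hφ.intAvg_comp_le hε zero_lt_one (hx₁.trans_le uLpt.fst_le_add) hfφ
    (expAvg.integrableOn_mul_exp_neg hε hεε₀ hint
      (hf.integrableOn_deriv3_mul_exp_neg (hε.trans hεε₀) le_rfl u))
    (fun w _ => hnonneg w) hpointwise
  have hdev := intAvg_sq_sub_intAvg_sq zero_lt_one
    (hφ.intervalIntegrable le_rfl zero_le_one le_rfl)
    (hφ.intervalIntegrable_sq le_rfl zero_le_one le_rfl) u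
  have htangent : intAvg (fun t => (φ t - u) ^ 2) 0 1 = 2 * ε * (x.1 - u) := by
    rw [hx₁, hx₂, uLpt.snd_sub_sq_fst hx] at hdev
    linarith
  rw [htangent, hx₁] at hbound
  linarith

/-! ### The extremal function -/

theorem integrableOn_Ici_pow_mul_exp_neg {ε : ℝ} (hε : 0 < ε) (n : ℕ) (w : ℝ) :
    IntegrableOn (fun t => t ^ n * exp (-t / ε)) (Ici w) := by
  have hrate : 0 < (2 * ε)⁻¹ := by positivity
  rw [integrableOn_Ici_iff_integrableOn_Ioi]
  refine integrable_of_isBigO_exp_neg hrate (Continuous.continuousOn (by fun_prop)) ?_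
  have hpow := (isLittleO_pow_exp_pos_mul_atTop n hrate).isBigO.mul
    (Asymptotics.isBigO_refl (fun t => exp (-t / ε)) atTop)
  refine hpow.congr_right fun t => ?_
  rw [← exp_add]
  congr 1
  field_simp
  ring

namespace expAvg

variable {ε : ℝ}

theorem pow_zero (hε : 0 < ε) (u : ℝ) : expAvg ε (fun t => t ^ 0) u = 1 := by
  have hparts := eq_add (k := fun t => t ^ 0) (k' := 0) hε.ne'
    (integrableOn_Ici_pow_mul_exp_neg hε 0 u) (by simp) (by simp)
  simpa [expAvg] using hparts

theorem pow_succ (hε : 0 < ε) (n : ℕ) (u : ℝ) :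
    expAvg ε (fun t => t ^ (n + 1)) u =
      u ^ (n + 1) + ε * ((n + 1) * expAvg ε (fun t => t ^ n) u) := by
  rw [eq_add (k' := fun t => (n + 1) * t ^ n) hε.ne'
    (integrableOn_Ici_pow_mul_exp_neg hε (n + 1) u)]
  · simp only [expAvg, mul_assoc, integral_const_mul]
    ring
  · simp only [mul_assoc]
    exact (integrableOn_Ici_pow_mul_exp_neg hε n u).const_mul _
  · intro y _
    rw [intervalIntegral.integral_const_mul, integral_pow]
    field_simp

end expAvg

section ChangeOfVariables

variable {ε a u : ℝ} {f : ℝ → ℝ}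

theorem mapsTo_mul_exp_sub_div (hε : 0 < ε) (ha : 0 < a) :
    MapsTo (fun y => a * exp ((u - y) / ε)) (Ioi u) (Ioo 0 a) := fun y (hy : u < y) =>
  ⟨by positivity, mul_lt_of_lt_one_right ha
    (exp_lt_one_iff.2 (div_neg_of_neg_of_pos (sub_neg.2 hy) hε))⟩

theorem mapsTo_add_mul_log_div (hε : 0 < ε) :
    MapsTo (fun t => u + ε * log (a / t)) (Ioo 0 a) (Ioi u) := fun _ ht =>
  lt_add_of_pos_right u (mul_pos hε (log_pos ((one_lt_div ht.1).2 ht.2)))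

theorem invOn_add_mul_log_div (hε : ε ≠ 0) (ha : 0 < a) :
    InvOn (fun t => u + ε * log (a / t)) (fun y => a * exp ((u - y) / ε)) (Ioi u) (Ioo 0 a) := by
  constructor
  · intro y _
    simp only [div_mul_cancel_left₀ ha.ne', log_inv, log_exp]
    field_simp
    ring
  · intro t ht
    simp only [sub_add_cancel_left, neg_div, mul_div_cancel_left₀ _ hε, exp_neg,
      exp_log (div_pos ha ht.1), inv_div, mul_div_cancel₀ _ ha.ne']

theorem bijOn_mul_exp_sub_div (hε : 0 < ε) (ha : 0 < a) :
    BijOn (fun y => a * exp ((u - y) / ε)) (Ioi u) (Ioo 0 a) :=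
  (invOn_add_mul_log_div hε.ne' ha).bijOn (mapsTo_mul_exp_sub_div hε ha)
    (mapsTo_add_mul_log_div hε)

theorem hasDerivAt_mul_exp_sub_div (y : ℝ) :
    HasDerivAt (fun y => a * exp ((u - y) / ε)) (a * (exp ((u - y) / ε) * (-1 / ε))) y :=
  (((hasDerivAt_id y).const_sub u).div_const ε).exp.const_mul a

theorem abs_deriv_smul_comp_mul_exp_sub_div (hε : 0 < ε) (ha : 0 < a) {y : ℝ} (hy : y ∈ Ioi u) :
    |a * (exp ((u - y) / ε) * (-1 / ε))| • f (u + ε * log (a / (a * exp ((u - y) / ε)))) =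
      a * (ε⁻¹ * exp (u / ε)) * (f y * exp (-y / ε)) := by
  have hinv : u + ε * log (a / (a * exp ((u - y) / ε))) = y :=
    (invOn_add_mul_log_div hε.ne' ha).1 hy
  have hexp : exp ((u - y) / ε) = exp (u / ε) * exp (-y / ε) := by
    rw [← exp_add, ← add_div, sub_eq_add_neg]
  rw [hinv, hexp, neg_div ε (1 : ℝ), mul_neg, mul_neg, abs_neg, abs_of_pos (by positivity),
    smul_eq_mul]
  ring

theorem integrableOn_comp_add_mul_log_div (hε : 0 < ε) (ha : 0 < a)
    (hf : IntegrableOn (fun t => f t * exp (-t / ε)) (Ici u)) :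
    IntegrableOn (fun t => f (u + ε * log (a / t))) (Ioo 0 a) := by
  have hbij := bijOn_mul_exp_sub_div (u := u) hε ha
  rw [← hbij.image_eq, integrableOn_image_iff_integrableOn_abs_deriv_smul measurableSet_Ioi
    (fun y _ => (hasDerivAt_mul_exp_sub_div y).hasDerivWithinAt) hbij.injOn]
  exact IntegrableOn.congr_fun ((hf.mono_set Ioi_subset_Ici_self).const_mul _)
    (fun y hy => (abs_deriv_smul_comp_mul_exp_sub_div hε ha hy).symm) measurableSet_Ioi

theorem integral_comp_add_mul_log_div (hε : 0 < ε) (ha : 0 < a) (f : ℝ → ℝ) :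
    ∫ t in Ioo 0 a, f (u + ε * log (a / t)) = a * expAvg ε f u := by
  have hbij := bijOn_mul_exp_sub_div (u := u) hε ha
  rw [← hbij.image_eq, integral_image_eq_integral_abs_deriv_smul measurableSet_Ioi
    (fun y _ => (hasDerivAt_mul_exp_sub_div y).hasDerivWithinAt) hbij.injOn,
    setIntegral_congr_fun measurableSet_Ioi fun y hy =>
      abs_deriv_smul_comp_mul_exp_sub_div hε ha hy,
    integral_const_mul, expAvg, integral_Ici_eq_integral_Ioi, mul_assoc]

end ChangeOfVariables

/-- The extremal function for the point of the tangent at `u` with first coordinate `u + ε * a`: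
equal to `u` beyond `a`, with a logarithmic singularity of strength `ε` at `0`. For `a = 0` it is
constant on `t > 0`. -/
noncomputable def logTail (ε u a t : ℝ) : ℝ := u + ε * log⁺ (a / t)

namespace logTail

variable {ε u a c d t : ℝ} {f : ℝ → ℝ}

theorem of_le (ht : 0 < t) (hta : t ≤ a) : logTail ε u a t = u + ε * log (a / t) := by
  rw [logTail, posLog_eq_log]
  rw [abs_of_nonneg (div_nonneg (ht.le.trans hta) ht.le)]
  exact (one_le_div ht).2 hta

theorem of_ge (ha : 0 ≤ a) (hat : a ≤ t) : logTail ε u a t = u := by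
  rw [logTail, posLog_eq_zero_iff _ |>.2, mul_zero, add_zero]
  rw [abs_of_nonneg (div_nonneg ha (ha.trans hat))]
  exact div_le_one_of_le₀ hat (ha.trans hat)

-- On `(0, d]` the function is again extremal, for the tangent at its value at `d`.
theorem eq_logTail_min (ha : 0 ≤ a) (ht : 0 < t) (htd : t ≤ d) :
    logTail ε u a t = logTail ε (logTail ε u a d) (min a d) t := by
  rcases le_total a d with had | hda
  · rw [of_ge ha had, min_eq_left had]
  · have hd : 0 < d := ht.trans_le htd
    rw [min_eq_right hda, of_le hd hda, of_le ht (htd.trans hda), of_le ht htd,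
      log_div (hd.trans_le hda).ne' ht.ne', log_div (hd.trans_le hda).ne' hd.ne',
      log_div hd.ne' ht.ne']
    ring

theorem le_self (hε : 0 ≤ ε) : u ≤ logTail ε u a t :=
  le_add_of_nonneg_right (mul_nonneg hε posLog_nonneg)

theorem intervalIntegrable_comp_self (hε : 0 < ε) (ha : 0 ≤ a)
    (hf : IntegrableOn (fun t => f t * exp (-t / ε)) (Ici u)) :
    IntervalIntegrable (fun t => f (logTail ε u a t)) volume 0 a := by
  rw [intervalIntegrable_iff_integrableOn_Ioo_of_le ha]
  rcases ha.eq_or_lt with rfl | ha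
  · simp
  · exact (integrableOn_comp_add_mul_log_div hε ha hf).congr_fun
      (fun t ht => by simp only [of_le ht.1 ht.2.le]) measurableSet_Ioo

theorem integral_comp_self (hε : 0 < ε) (ha : 0 ≤ a) (f : ℝ → ℝ) :
    ∫ t in 0..a, f (logTail ε u a t) = a * expAvg ε f u := by
  rcases ha.eq_or_lt with rfl | ha
  · simp
  · rw [intervalIntegral.integral_of_le ha.le, integral_Ioc_eq_integral_Ioo,
      ← integral_comp_add_mul_log_div hε ha]
    exact setIntegral_congr_fun measurableSet_Ioo fun t ht => by simp only [of_le ht.1 ht.2.le]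

theorem eqOn_comp_const (ha : 0 ≤ a) (had : a ≤ d) (f : ℝ → ℝ) :
    EqOn (fun t => f (logTail ε u a t)) (fun _ => f u) (uIcc a d) := fun t ht => by
  simp only [of_ge ha (uIcc_of_le had ▸ ht).1]

theorem intervalIntegrable_comp (hε : 0 < ε) (ha : 0 ≤ a)
    (hf : IntegrableOn (fun t => f t * exp (-t / ε)) (Ici u)) (hc : 0 ≤ c) (hd : 0 ≤ d) :
    IntervalIntegrable (fun t => f (logTail ε u a t)) volume c d := by
  suffices hzero : ∀ d, 0 ≤ d → IntervalIntegrable (fun t => f (logTail ε u a t)) volume 0 d from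
    (hzero c hc).symm.trans (hzero d hd)
  intro d hd
  have hmax : IntervalIntegrable (fun t => f (logTail ε u a t)) volume a (max a d) :=
    IntervalIntegrable.congr
      ((eqOn_comp_const ha (le_max_left a d) f).symm.mono uIoc_subset_uIcc)
      intervalIntegrable_const
  refine ((intervalIntegrable_comp_self hε ha hf).trans hmax).mono_set ?_
  exact uIcc_subset_uIcc_left (uIcc_of_le (hd.trans (le_max_right a d)) ▸ ⟨hd, le_max_right a d⟩)

theorem integral_comp_of_le (hε : 0 < ε) (ha : 0 ≤ a) (had : a ≤ d)
    (hf : IntegrableOn (fun t => f t * exp (-t / ε)) (Ici u)) :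
    ∫ t in 0..d, f (logTail ε u a t) = a * expAvg ε f u + (d - a) * f u := by
  rw [← intervalIntegral.integral_add_adjacent_intervals
      (intervalIntegrable_comp hε ha hf le_rfl ha)
      (intervalIntegrable_comp hε ha hf ha (ha.trans had)),
    integral_comp_self hε ha, intervalIntegral.integral_congr (eqOn_comp_const ha had f),
    intervalIntegral.integral_const, smul_eq_mul]

theorem integral_comp (hε : 0 < ε) (ha : 0 ≤ a) (hd : 0 ≤ d)
    (hf : IntegrableOn (fun t => f t * exp (-t / ε)) (Ici u)) :
    ∫ t in 0..d, f (logTail ε u a t) =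
      min a d * expAvg ε f (logTail ε u a d) + (d - min a d) * f (logTail ε u a d) := by
  rw [← integral_comp_of_le hε (le_min ha hd) (min_le_right a d)
    (hf.mono_set (Ici_subset_Ici.2 (le_self hε.le)))]
  refine intervalIntegral.integral_congr_Ioo_of_le hd fun t ht => ?_
  rw [eq_logTail_min ha ht.1 ht.2.le]

theorem intervalIntegrable_pow (hε : 0 < ε) (ha : 0 ≤ a) (n : ℕ) (hc : 0 ≤ c) (hd : 0 ≤ d) :
    IntervalIntegrable (fun t => logTail ε u a t ^ n) volume c d :=
  intervalIntegrable_comp (f := fun v => v ^ n) hε ha (integrableOn_Ici_pow_mul_exp_neg hε n u)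
    hc hd

theorem integral_eq (hε : 0 < ε) (ha : 0 ≤ a) (hd : 0 ≤ d) :
    ∫ t in 0..d, logTail ε u a t = d * logTail ε u a d + min a d * ε := by
  have hmoment := integral_comp (f := fun v => v ^ 1) hε ha hd
    (integrableOn_Ici_pow_mul_exp_neg hε 1 u)
  rw [expAvg.pow_succ hε 0, expAvg.pow_zero hε] at hmoment
  simp only [pow_one, zero_add, CharP.cast_eq_zero] at hmoment
  rw [hmoment]
  ring

theorem integral_sq (hε : 0 < ε) (ha : 0 ≤ a) (hd : 0 ≤ d) :
    ∫ t in 0..d, logTail ε u a t ^ 2 =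
      d * logTail ε u a d ^ 2 + 2 * min a d * ε * (logTail ε u a d + ε) := by
  rw [integral_comp (f := fun v => v ^ 2) hε ha hd (integrableOn_Ici_pow_mul_exp_neg hε 2 u),
    expAvg.pow_succ hε 1, expAvg.pow_succ hε 0, expAvg.pow_zero hε]
  push_cast
  ring

theorem intAvg_eq (hε : 0 < ε) (ha : 0 ≤ a) (ha₁ : a ≤ 1) :
    intAvg (logTail ε u a) 0 1 = u + ε * a := by
  rw [intAvg, integral_eq hε ha zero_le_one, of_ge ha ha₁, min_eq_left ha₁]
  ring

theorem intAvg_sq (hε : 0 < ε) (ha : 0 ≤ a) (ha₁ : a ≤ 1) :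
    intAvg (fun t => logTail ε u a t ^ 2) 0 1 = u ^ 2 + 2 * ε * a * (u + ε) := by
  rw [intAvg, integral_sq hε ha zero_le_one, of_ge ha ha₁, min_eq_left ha₁]
  ring

theorem integral_sub_sq (hε : 0 < ε) (ha : 0 ≤ a) (hd : 0 ≤ d) (K : ℝ) :
    ∫ t in 0..d, (logTail ε u a t - K) ^ 2 =
      d * (logTail ε u a d - K) ^ 2 + 2 * min a d * ε * (logTail ε u a d - K + ε) := by
  rw [integral_sq_sub_const (by simpa using intervalIntegrable_pow hε ha 1 le_rfl hd)
    (intervalIntegrable_pow hε ha 2 le_rfl hd), integral_sq hε ha hd, integral_eq hε ha hd]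
  ring

theorem mul_le_integral_sub_sq (hε : 0 < ε) (ha : 0 ≤ a) (hc : 0 ≤ c) (hcd : c ≤ d) :
    ε ^ 2 * c ≤ ∫ t in 0..c, (logTail ε u a t - (logTail ε u a d + ε)) ^ 2 := by
  rw [integral_sub_sq hε ha hc]
  rcases hc.eq_or_lt with rfl | hc
  · simp [ha]
  rcases le_total a c with hac | hca
  · simp only [of_ge ha hac, of_ge ha (hac.trans hcd)]
    nlinarith
  · rw [min_eq_right hca]
    nlinarith [mul_nonneg hc.le (sq_nonneg (logTail ε u a c - logTail ε u a d))]

-- Comparing with the constant `logTail ε u a d + ε` instead of the mean over `[c, d]` makes the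
-- integral over `[0, d]` exactly `ε ^ 2 * d`.
theorem _root_.memBMOe_logTail (hε : 0 < ε) (ha : 0 ≤ a) (hd : 0 ≤ d) :
    memBMOe ε 0 d (logTail ε u a) := by
  have hint : ∀ {c d}, 0 ≤ c → 0 ≤ d → IntervalIntegrable (logTail ε u a) volume c d :=
    fun hc hd => by simpa using intervalIntegrable_pow hε ha 1 hc hd
  have hint_sq : ∀ {c d}, 0 ≤ c → 0 ≤ d →
      IntervalIntegrable (fun t => logTail ε u a t ^ 2) volume c d :=
    intervalIntegrable_pow hε ha 2
  refine ⟨(intervalIntegrable_iff_integrableOn_Ioo_of_le hd).1 (hint le_rfl hd),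
    (intervalIntegrable_iff_integrableOn_Ioo_of_le hd).1 (hint_sq le_rfl hd),
    fun c d hc hcd _ => ?_⟩
  have hd : 0 ≤ d := hc.trans hcd.le
  set K := logTail ε u a d + ε
  have hint_sub : ∀ {b}, 0 ≤ b →
      IntervalIntegrable (fun t => (logTail ε u a t - K) ^ 2) volume 0 b :=
    fun hb => intervalIntegrable_sq_sub_const (hint le_rfl hb) (hint_sq le_rfl hb) K
  have hwhole : ∫ t in 0..d, (logTail ε u a t - K) ^ 2 = ε ^ 2 * d := by
    rw [integral_sub_sq hε ha hd]
    ring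
  have havg : intAvg (fun t => (logTail ε u a t - K) ^ 2) c d ≤ ε ^ 2 := by
    rw [intAvg, div_le_iff₀ (sub_pos.2 hcd),
      ← intervalIntegral.integral_interval_sub_left (hint_sub hd) (hint_sub hc), hwhole]
    linarith [mul_le_integral_sub_sq (u := u) hε ha hc hcd.le]
  rw [intAvg_sq_sub_intAvg_sq hcd (hint hc hd) (hint_sq hc hd) K]
  linarith [sq_nonneg (intAvg (logTail ε u a) c d - K)]

end logTail

theorem memWcl.intAvg_comp_logTail {ε ε₀ u a : ℝ} {f f3 : ℝ → ℝ} (hf : memWcl ε₀ f f3) (hε : 0 < ε)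
    (hεε₀ : ε ≤ ε₀) (ha : 0 ≤ a) (ha₁ : a ≤ 1) :
    intAvg (fun t => f (logTail ε u a t)) 0 1 = expAvg ε (deriv f) u * (ε * a) + f u := by
  rw [intAvg, logTail.integral_comp_of_le hε ha ha₁ (hf.integrableOn_mul_exp_neg hε hεε₀ u),
    hf.expAvg_eq hε hεε₀]
  ring

theorem stmt10 (ε ε₀ : ℝ) (hε : 0 < ε) (hεε₀ : ε < ε₀) (f f3 : ℝ → ℝ)
    (hf : memWcl ε₀ f f3)
    (hpos : ∀ u : ℝ, 0 ≤ ∫ t in Ici u, f3 t * Real.exp (-t / ε)) :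
    ∀ x ∈ parabStrip ε,
      bellmanFn ε f x.1 x.2 =
        (ε⁻¹ * Real.exp ((uLpt ε x) / ε) *
            ∫ t in Ici (uLpt ε x), deriv f t * Real.exp (-t / ε)) *
          (x.1 - uLpt ε x) + f (uLpt ε x) := by
  intro x hx
  change bellmanFn ε f x.1 x.2 = expAvg ε (deriv f) (uLpt ε x) * (x.1 - uLpt ε x) + f (uLpt ε x)
  set u := uLpt ε x
  obtain ⟨a, ha, ha₁, hxa⟩ : ∃ a, 0 ≤ a ∧ a ≤ 1 ∧ x.1 = u + ε * a :=
    ⟨(x.1 - u) / ε, div_nonneg (sub_nonneg.2 (uLpt.le_fst hε.le hx)) hε.le,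
      div_le_one_of_le₀ (sub_le_iff_le_add'.2 uLpt.fst_le_add) hε.le, by field_simp; ring⟩
  refine IsGreatest.csSup_eq ⟨⟨logTail ε u a, memBMOe_logTail hε ha zero_le_one,
    ?_, ?_, ?_, ?_⟩, ?_⟩
  · exact (intervalIntegrable_iff_integrableOn_Ioo_of_le zero_le_one).1
      (logTail.intervalIntegrable_comp hε ha (hf.integrableOn_mul_exp_neg hε hεε₀.le u) le_rfl
        zero_le_one)
  · rw [logTail.intAvg_eq hε ha ha₁, hxa]
  · rw [logTail.intAvg_sq hε ha ha₁]
    linear_combination -uLpt.snd_sub_sq_fst hx - 2 * (u + ε) * hxa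
  · rw [hf.intAvg_comp_logTail hε hεε₀.le ha ha₁, hxa, add_sub_cancel_left]
  · rintro _ ⟨φ, hφ, hfφ, hx₁, hx₂, rfl⟩
    rw [add_comm]
    exact hf.intAvg_comp_le hε hεε₀ (fun w => mul_nonneg (by positivity) (hpos w)) hx hφ hfφ hx₁ hx₂
end
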